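/- arXiv:math/0701139 — 9 statements merged into one kernel-verified Lean document; each statement's English description precedes it below -/
import Mathlib

section
/- Let F be a field (of arbitrary characteristic), let E = F(α) be a field extension of F of degree d with norm form φ = N_{E/F}, and let K/F be a finite field extension which is linearly disjoint from E over F (i.e. K ⊗_F E is a field). If e ∈ K^× is represented by the extended form, i.e. e = N_{(K⊗_F E)/K}(z) for some z ∈ K ⊗_F E, then N_{K/F}(e) is represented by φ, i.e. N_{K/F}(e) = N_{E/F}(w) for some w ∈ E. Consequently, if a ∈ K^× is a similarity factor of the extended form, then N_{K/F}(a) is a similarity factor of N_{E/F}. -/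
/-!
Both claims rest on transitivity of the norm, computed along the two towers
`F ⊆ K ⊆ K ⊗ E` and `F ⊆ E ⊆ K ⊗ E`: for `z ∈ K ⊗ E`,
`N_{K/F} (N_{K ⊗ E / K} z) = N_{K ⊗ E / F} z = N_{E/F} (N_{K ⊗ E / E} z)`,
so `w = N_{K ⊗ E / E} z` represents `N_{K/F} e` whenever `z` represents `e`.

For similarity factors, evaluating at `z = 1` shows that a similarity factor `a` of the extended
form is represented by it. Hence `N_{K/F} a = N_{E/F} w` for some `w ≠ 0` in `E`, and
multiplication by `w` is a similitude of `N_{E/F}` with factor `N_{K/F} a`.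
-/

open TensorProduct

/-- Transitivity of the norm along the two towers below `K ⊗[F] E`. The `E`-algebra structure is
taken on `E ⊗[F] K`, where it is the standard left one. -/
theorem norm_norm_tensor_comm {F E K : Type*} [Field F] [Field E] [Field K]
    [Algebra F E] [Algebra F K] [FiniteDimensional F E] [FiniteDimensional F K]
    (z : K ⊗[F] E) :
    Algebra.norm F (Algebra.norm E (Algebra.TensorProduct.comm F K E z)) =
      Algebra.norm F (Algebra.norm K z) := by
  rw [Algebra.norm_norm, Algebra.norm_norm]
  exact Algebra.norm_eq_of_algEquiv (Algebra.TensorProduct.comm F K E) z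

/-- **Scharlau's norm principle for norms of simple extensions, linearly disjoint case.**
Let `E = F(α)` be a field extension of `F` of degree `d` with norm form `φ = N_{E/F}`, and
let `K/F` be a finite field extension linearly disjoint from `E` over `F` (i.e. `K ⊗[F] E`
is a field).  If `e ∈ K^×` is represented by the extended form `N_{(K⊗E)/K}`, then
`N_{K/F}(e)` is represented by `N_{E/F}`; consequently, if `a ∈ K^×` is a similarity factor
of the extended form, then `N_{K/F}(a)` is a similarity factor of `N_{E/F}`. -/
theorem scharlau_norm_principle_linearly_disjoint
    (F E K : Type*) [Field F] [Field E] [Field K]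
    [Algebra F E] [Algebra F K] [FiniteDimensional F E] [FiniteDimensional F K]
    (d : ℕ) (hd : Module.finrank F E = d)
    (α : E) (hα : IntermediateField.adjoin F {α} = ⊤)
    (hdisj : IsField (K ⊗[F] E)) :
    (∀ e : K, e ≠ 0 →
      (∃ z : K ⊗[F] E, Algebra.norm K z = e) →
      ∃ w : E, Algebra.norm F w = Algebra.norm F e) ∧
    (∀ a : K, a ≠ 0 →
      (∃ g : (K ⊗[F] E) ≃ₗ[K] (K ⊗[F] E),
        ∀ z : K ⊗[F] E, Algebra.norm K (g z) = a * Algebra.norm K z) →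
      ∃ h : E ≃ₗ[F] E,
        ∀ x : E, Algebra.norm F (h x) = Algebra.norm F a * Algebra.norm F x) := by
  have represented : ∀ e : K, (∃ z : K ⊗[F] E, Algebra.norm K z = e) →
      ∃ w : E, Algebra.norm F w = Algebra.norm F e := by
    rintro _ ⟨z, rfl⟩
    exact ⟨_, norm_norm_tensor_comm z⟩
  refine ⟨fun e _ he => represented e he, ?_⟩
  rintro a ha ⟨g, hg⟩
  obtain ⟨w, hw⟩ := represented a ⟨g 1, by rw [hg, map_one, mul_one]⟩
  have hw0 : w ≠ 0 := by
    rintro rfl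
    rw [Algebra.norm_zero] at hw
    exact ha (Algebra.norm_eq_zero_iff.mp hw.symm)
  refine ⟨LinearEquiv.ofBijective (LinearMap.mulLeft F w) (mulLeft_bijective₀ w hw0), ?_⟩
  intro x
  change Algebra.norm F (w * x) = _
  rw [map_mul, hw]
end

section
/- Let F be a field, let E = F(α) be a field extension of degree d with α^d = c ∈ F, and let K/F be a quadratic Galois field extension with nontrivial F-automorphism σ, such that X^d − c remains irreducible over K (so [K(α):K] = d). For z_1, …, z_d ∈ K, define A_{2r} = Σ_{1≤i,j≤d, i+j=r+2} z_i σ(z_j) for 0 ≤ r ≤ d−1 and A_{2r+1} = Σ_{1≤i,j≤d, i+j=d+r+2} z_i σ(z_j) for 0 ≤ r ≤ d−2. Then each A_i lies in F, and N_{K/F}( N_{K(α)/K}( Σ_{i=1}^{d} z_i α^{i−1} ) ) = N_{E/F}( Σ_{r=0}^{d−2} (A_{2r} + c·A_{2r+1}) α^r + A_{2d−2} α^{d−1} ). In particular, N_{K/F} of any value of the extended norm form is a value (hence a similarity factor) of N_{E/F}. -/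
/-!
Put `p = ∑ z_i X^i ∈ K[X]`.  In the basis `1, β, …, β^(d-1)` multiplication by `β` is the companion
matrix `M` of `X^d - c`, whose entries lie in `F`, so `N_{L/K}(p(β)) = det p(M)`
(`norm_aeval_eq_det`).  Applying `σ` fixes `M` and conjugates the coefficients of `p`, hence
`N_{K/F}(det p(M)) = det p(M) · det (σp)(M) = det (p · σp)(M)`.  The polynomial `p · σp` is fixed
by `σ`, so it comes from some `q ∈ F[X]` with coefficients `B_r = ∑_{i+j=r} z_i σ(z_j)`, and the
determinant is `det q(M) = N_{E/F}(q(α))` by the same lemma over `F`.  Reducing `q(α)` with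
`α^d = c` gives the stated expression.
-/

open Polynomial

/-- The companion matrix of `X^d - c`: the matrix of multiplication by a root `a` in the basis
`1, a, …, a^(d-1)`, acting on columns. -/
def powCompanion {R : Type*} [CommRing R] (d : ℕ) (c : R) : Matrix (Fin d) (Fin d) R :=
  Matrix.of fun i j =>
    if (j : ℕ) + 1 < d then (if (i : ℕ) = j + 1 then 1 else 0)
    else (if (i : ℕ) = 0 then c else 0)

theorem powCompanion_map {R S : Type*} [CommRing R] [CommRing S] (f : R →+* S) (d : ℕ) (c : R) :
    f.mapMatrix (powCompanion d c) = powCompanion d (f c) := by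
  ext i j
  simp only [powCompanion, RingHom.mapMatrix_apply, Matrix.map_apply, Matrix.of_apply]
  split_ifs <;> simp

/-- Evaluating at the companion matrix and taking the determinant commutes with a base change. -/
theorem map_det_aeval_powCompanion {R S : Type*} [CommRing R] [CommRing S] (f : R →+* S)
    (d : ℕ) (c : R) (p : R[X]) :
    f (aeval (powCompanion d c) p).det = (aeval (powCompanion d (f c)) (p.map f)).det := by
  rw [RingHom.map_det]
  congr 1
  rw [← powCompanion_map]
  simp only [aeval_def, eval₂_map]
  rw [hom_eval₂]
  congr 1
  ext r i j
  simp only [RingHom.comp_apply, RingHom.mapMatrix_apply, Matrix.map_apply,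
    Matrix.algebraMap_matrix_apply]
  split_ifs <;> simp

/-- Norms from a pure extension `k(α)`, `α^d = c`, are determinants of polynomials in a matrix that
depends only on `c`, which makes the norms over `F` and over `K` comparable. -/
theorem norm_aeval_eq_det {k E : Type*} [Field k] [Field E] [Algebra k E] [FiniteDimensional k E]
    (d : ℕ) (c : k) (α : E) (hgen : IntermediateField.adjoin k {α} = ⊤)
    (hpow : α ^ d = algebraMap k E c) (hdeg : Module.finrank k E = d) (p : k[X]) :
    Algebra.norm k (aeval α p) = (aeval (powCompanion d c) p).det := by
  have hint : IsIntegral k α := IsIntegral.of_finite k α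
  let pb := PowerBasis.ofAdjoinEqTop hint
    ((IntermediateField.adjoin_simple_toSubalgebra_of_isAlgebraic hint.isAlgebraic).symm.trans
      (by rw [hgen]; rfl))
  have hpbgen : pb.gen = α := PowerBasis.ofAdjoinEqTop_gen _ _
  have hdim : pb.dim = d := by rw [← pb.finrank, hdeg]
  let b : Module.Basis (Fin d) k E := pb.basis.reindex (finCongr hdim)
  have hb : ∀ i : Fin d, b i = α ^ (i : ℕ) := by
    intro i
    simp [b, hpbgen]
  have hM : Algebra.leftMulMatrix b α = powCompanion d c := by
    ext i j
    rw [Algebra.leftMulMatrix_eq_repr_mul, hb, ← pow_succ']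
    simp only [powCompanion, Matrix.of_apply]
    split_ifs with h1 h2 h2
    · rw [← hb ⟨j + 1, h1⟩, b.repr_self, Finsupp.single_apply, if_pos (Fin.ext h2.symm)]
    · rw [← hb ⟨j + 1, h1⟩, b.repr_self, Finsupp.single_apply,
        if_neg (fun h => h2 (congrArg Fin.val h).symm)]
    all_goals
      have hj : (j : ℕ) + 1 = d := by omega
      have h0 : 0 < d := by omega
      have : α ^ ((j : ℕ) + 1) = c • b ⟨0, h0⟩ := by
        rw [hj, hpow, hb, pow_zero, Algebra.algebraMap_eq_smul_one]
      rw [this, map_smul, b.repr_self, Finsupp.smul_apply, Finsupp.single_apply]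
    · rw [if_pos (Fin.ext h2.symm), smul_eq_mul, mul_one]
    · rw [if_neg (fun h => h2 (congrArg Fin.val h).symm), smul_zero]
  rw [Algebra.norm_eq_matrix_det b, ← aeval_algHom_apply, hM]

/-- In a quadratic Galois extension `1` and `σ` are the only automorphisms, so the norm is
`x · σ x`. -/
theorem norm_quadratic {F K : Type*} [Field F] [Field K] [Algebra F K] [FiniteDimensional F K]
    [IsGalois F K] (hK2 : Module.finrank F K = 2) (σ : K ≃ₐ[F] K) (hσ : σ ≠ 1) :
    (∀ τ : K ≃ₐ[F] K, τ = 1 ∨ τ = σ) ∧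
      ∀ x : K, algebraMap F K (Algebra.norm F x) = x * σ x := by
  classical
  have huniv : (Finset.univ : Finset (K ≃ₐ[F] K)) = {1, σ} := by
    symm
    apply Finset.eq_univ_of_card
    rw [Finset.card_pair hσ.symm, ← Nat.card_eq_fintype_card, IsGalois.card_aut_eq_finrank, hK2]
  refine ⟨fun τ => ?_, fun x => ?_⟩
  · have := Finset.mem_univ τ
    rw [huniv] at this
    simpa using this
  · rw [Algebra.norm_eq_prod_automorphisms, huniv, Finset.prod_pair hσ.symm]
    simp

/-- **Explicit norm computation for the norm form of `E = F(α)`, `α^d = c`, over a quadratic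
Galois extension `K/F`.**  With `σ` the nontrivial `F`-automorphism of `K` and `X^d - c`
still irreducible over `K` (so that `L = K(α)` has degree `d` over `K`), for
`z_1, …, z_d ∈ K` (indexed here as `z 0, …, z (d-1)`) the quantities
`A_{2r} = ∑_{i+j=r} z_i σ(z_j)` (`0 ≤ r ≤ d-1`) and `A_{2r+1} = ∑_{i+j=d+r} z_i σ(z_j)`
(`0 ≤ r ≤ d-2`) lie in `F`, and
`N_{K/F}(N_{K(α)/K}(∑ z_i α^i)) = N_{E/F}(∑_{r<d-1} (A_{2r} + c A_{2r+1}) α^r + A_{2d-2} α^{d-1})`,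
which in particular is a value of `N_{E/F}`. -/
theorem norm_identity_pure_power_case
    (F E K L : Type*) [Field F] [Field E] [Field K] [Field L]
    [Algebra F E] [Algebra F K] [Algebra K L] [Algebra F L] [IsScalarTower F K L]
    [FiniteDimensional F E] [FiniteDimensional F K] [FiniteDimensional K L]
    (d : ℕ) (c : F)
    (α : E) (hαgen : IntermediateField.adjoin F {α} = ⊤)
    (hαpow : α ^ d = algebraMap F E c) (hEdeg : Module.finrank F E = d)
    [IsGalois F K] (hK2 : Module.finrank F K = 2)
    (σ : K ≃ₐ[F] K) (hσ : σ ≠ 1)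
    (hirr : Irreducible (X ^ d - C (algebraMap F K c)))
    (β : L) (hβgen : IntermediateField.adjoin K {β} = ⊤)
    (hβpow : β ^ d = algebraMap F L c)
    (hLdeg : Module.finrank K L = d)
    (z : ℕ → K) :
    ∃ A : ℕ → F,
      (∀ r : ℕ, r < d →
        algebraMap F K (A (2 * r)) =
          ∑ p ∈ (Finset.range d ×ˢ Finset.range d).filter (fun p => p.1 + p.2 = r),
            z p.1 * σ (z p.2)) ∧
      (∀ r : ℕ, r + 2 ≤ d →
        algebraMap F K (A (2 * r + 1)) =
          ∑ p ∈ (Finset.range d ×ˢ Finset.range d).filter (fun p => p.1 + p.2 = d + r),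
            z p.1 * σ (z p.2)) ∧
      Algebra.norm F
          (Algebra.norm K (∑ i ∈ Finset.range d, algebraMap K L (z i) * β ^ i)) =
        Algebra.norm F
          ((∑ r ∈ Finset.range (d - 1),
              algebraMap F E (A (2 * r) + c * A (2 * r + 1)) * α ^ r) +
            algebraMap F E (A (2 * d - 2)) * α ^ (d - 1)) := by
  obtain ⟨hG, hN⟩ := norm_quadratic hK2 σ hσ
  have hσσ : ∀ x, σ (σ x) = x := by
    intro x
    rcases hG (σ * σ) with h | h
    · exact congrArg (fun τ : K ≃ₐ[F] K => τ x) h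
    · exact absurd (mul_eq_left.mp h) hσ
  have hd : 0 < d := hEdeg ▸ Module.finrank_pos
  have hB : ∀ r : ℕ, ∃ b : F, algebraMap F K b =
      ∑ p ∈ (Finset.range d ×ˢ Finset.range d).filter (fun p => p.1 + p.2 = r),
        z p.1 * σ (z p.2) := by
    intro r
    refine (IsGalois.mem_range_algebraMap_iff_fixed _).mpr fun τ => ?_
    rcases hG τ with rfl | rfl
    · rfl
    -- swapping the two indices undoes the action of `τ`
    rw [map_sum]
    refine Finset.sum_bij' (fun p _ => p.swap) (fun p _ => p.swap) ?_ ?_ ?_ ?_ ?_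
    · simp only [Finset.mem_filter, Finset.mem_product, Prod.fst_swap, Prod.snd_swap]
      rintro p ⟨⟨h1, h2⟩, h3⟩
      exact ⟨⟨h2, h1⟩, by omega⟩
    · simp only [Finset.mem_filter, Finset.mem_product, Prod.fst_swap, Prod.snd_swap]
      rintro p ⟨⟨h1, h2⟩, h3⟩
      exact ⟨⟨h2, h1⟩, by omega⟩
    · simp
    · simp
    · intro p _
      simp [hσσ, mul_comm]
  choose B hB using hB
  have hA0 : ∀ r, (fun n : ℕ => if n % 2 = 0 then B (n / 2) else B (d + n / 2)) (2 * r) = B r := by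
    intro r
    simp
  have hA1 : ∀ r, (fun n : ℕ => if n % 2 = 0 then B (n / 2) else B (d + n / 2)) (2 * r + 1)
      = B (d + r) := by
    intro r
    have h1 : (2 * r + 1) % 2 = 1 := by omega
    have h2 : (2 * r + 1) / 2 = r := by omega
    simp only [h1, h2, one_ne_zero, if_false]
  generalize (fun n : ℕ => if n % 2 = 0 then B (n / 2) else B (d + n / 2)) = A at hA0 hA1
  refine ⟨A, fun r _ => by rw [hA0, hB], fun r _ => by rw [hA1, hB], ?_⟩
  let p : K[X] := ∑ i ∈ Finset.range d, C (z i) * X ^ i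
  let q : F[X] := ∑ r ∈ Finset.range (d + (d - 1)), C (B r) * X ^ r
  have hp : ∑ i ∈ Finset.range d, algebraMap K L (z i) * β ^ i = aeval β p := by
    simp [p]
  have hq : (∑ r ∈ Finset.range (d - 1),
      algebraMap F E (A (2 * r) + c * A (2 * r + 1)) * α ^ r) +
        algebraMap F E (A (2 * d - 2)) * α ^ (d - 1) = aeval α q := by
    have h2 : 2 * d - 2 = 2 * (d - 1) := by omega
    have h3 : Finset.range d = Finset.range (d - 1 + 1) := by congr 1; omega
    simp only [q, map_sum, map_mul, aeval_C, aeval_X_pow, map_add, h2, hA0, hA1]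
    rw [Finset.sum_range_add, h3, Finset.sum_range_succ]
    simp only [pow_add]
    simp only [add_mul, Finset.sum_add_distrib]
    rw [add_right_comm]
    congr 1
    refine Finset.sum_congr rfl fun r _ => ?_
    rw [hαpow]
    ring
  have hpq : q.map (algebraMap F K) = p * p.map (σ : K →+* K) := by
    simp only [p, q, Polynomial.map_sum, Polynomial.map_mul, Polynomial.map_pow, map_C, map_X, hB]
    rw [Finset.sum_mul_sum, ← Finset.sum_product',
      ← Finset.sum_fiberwise_of_maps_to (t := Finset.range (d + (d - 1)))
        (g := fun x : ℕ × ℕ => x.1 + x.2)]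
    · refine Finset.sum_congr rfl fun r _ => ?_
      rw [map_sum, Finset.sum_mul]
      refine Finset.sum_congr rfl fun x hx => ?_
      rw [← (Finset.mem_filter.mp hx).2, pow_add, map_mul]
      simp only [RingHom.coe_coe]
      ring
    · simp only [Finset.mem_product, Finset.mem_range]
      intro x hx
      omega
  rw [hp, hq]
  apply (algebraMap F K).injective
  rw [hN, norm_aeval_eq_det d (algebraMap F K c) β hβgen
      (by rw [hβpow, IsScalarTower.algebraMap_apply F K L]) hLdeg,
    norm_aeval_eq_det d c α hαgen hαpow hEdeg, map_det_aeval_powCompanion, hpq, map_mul,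
    Matrix.det_mul]
  congr 1
  have := map_det_aeval_powCompanion (σ : K →+* K) d (algebraMap F K c) p
  simpa using this
end

section
/- Let F be a field, let E = F(α) be a field extension of degree d with α^d = bα + c for b, c ∈ F, and let K/F be a quadratic Galois field extension with nontrivial F-automorphism σ, such that X^d − bX − c remains irreducible over K (so [K(α):K] = d). For z_1, …, z_d ∈ K, define A_{2r} = Σ_{1≤i,j≤d, i+j=r+2} z_i σ(z_j) for 0 ≤ r ≤ d−1, A_{2r+1} = Σ_{1≤i,j≤d, i+j=d+r+2} z_i σ(z_j) for 0 ≤ r ≤ d−2, and set A_{−1} = 0 and A_{2d−1} = 0. Then each A_i lies in F, and N_{K/F}( N_{K(α)/K}( Σ_{i=1}^{d} z_i α^{i−1} ) ) = N_{E/F}( Σ_{r=0}^{d−1} (A_{2r} + c·A_{2r+1} + b·A_{2r−1}) α^r ). In particular, N_{K/F} of any value of the extended norm form is a value (hence a similarity factor) of N_{E/F}. -/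
/-!
The norm of `p(α)` in a simple extension is the determinant of `p` evaluated at the companion
matrix of the minimal polynomial of `α` (`norm_aeval_gen`), so it is compatible with every ring
homomorphism of base fields that carries one minimal polynomial to the other (`map_norm_aeval`).
The minimal polynomial of `β` over `K` is the image of that of `α` over `F`
(`map_minpoly_eq`), and in particular `σ` fixes its coefficients. Hence, for `x = ∑ z_i β^i` and its
conjugate `y = ∑ σ(z_i) β^i`, we have `σ(N_{L/K}(x)) = N_{L/K}(y)`, so that
`N_{K/F}(N_{L/K}(x)) = N_{L/K}(x y)`. Collecting powers of `β` in `x y` and reducing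
with `β^d = bβ + c` (`reduce_sum`) turns `x y` into a polynomial in `β` whose coefficients are the
stated combinations of the `A_i`. The `A_i` are fixed by `σ` because swapping the summation indices
exchanges `z_i σ(z_j)` and `z_j σ(z_i)`, so they lie in `F`, and compatibility of norms along
`F → K` finishes the proof.
-/

open Polynomial

/-- The companion matrix of a monic polynomial `f` of degree `n`, acting on columns: column `j` holds
the coordinates of `x * x ^ j` in the basis `1, x, …, x ^ (n - 1)`, where `f(x) = 0`. -/
def companionMatrix {R : Type*} [CommRing R] (n : ℕ) (f : R[X]) : Matrix (Fin n) (Fin n) R :=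
  Matrix.of fun i j =>
    if (j : ℕ) + 1 = n then -f.coeff i else if (i : ℕ) = j + 1 then 1 else 0

lemma companionMatrix_map {R S : Type*} [CommRing R] [CommRing S] (φ : R →+* S) (n : ℕ)
    (f : R[X]) : φ.mapMatrix (companionMatrix n f) = companionMatrix n (f.map φ) := by
  ext i j
  simp only [companionMatrix, RingHom.mapMatrix_apply, Matrix.map_apply, Matrix.of_apply, coeff_map]
  split_ifs <;> simp

lemma norm_aeval_gen {K S : Type*} [Field K] [CommRing S] [Algebra K S]
    (pb : PowerBasis K S) (n : ℕ) (hn : pb.dim = n) (p : K[X]) :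
    Algebra.norm K (aeval pb.gen p) = (aeval (companionMatrix n (minpoly K pb.gen)) p).det := by
  subst hn
  rw [Algebra.norm_eq_matrix_det pb.basis, ← Polynomial.aeval_algHom_apply, pb.leftMulMatrix,
    pb.minpolyGen_eq]
  rfl

lemma norm_aeval_of_adjoin {K S : Type*} [Field K] [Field S] [Algebra K S]
    [FiniteDimensional K S] (x : S) (hx : IntermediateField.adjoin K {x} = ⊤) (p : K[X]) :
    Algebra.norm K (aeval x p) =
      (aeval (companionMatrix (Module.finrank K S) (minpoly K x)) p).det := by
  have hint : IsIntegral K x := .of_finite K x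
  have htop : Algebra.adjoin K {x} = ⊤ := by
    rw [← IntermediateField.adjoin_simple_toSubalgebra_of_isAlgebraic hint.isAlgebraic, hx,
      IntermediateField.top_toSubalgebra]
  have h := norm_aeval_gen (PowerBasis.ofAdjoinEqTop hint htop) _
    (PowerBasis.finrank _).symm p
  rwa [PowerBasis.ofAdjoinEqTop_gen] at h

/-- Norms of polynomial expressions in a generator commute with any homomorphism of the base fields
carrying one minimal polynomial to the other. This is used both for the inclusion `F → K` and for
the automorphism `σ` of `K`. -/
lemma map_norm_aeval {F K E L : Type*} [Field F] [Field K] [Field E] [Field L]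
    [Algebra F E] [Algebra K L] [FiniteDimensional F E] [FiniteDimensional K L]
    (φ : F →+* K) (x : E) (y : L)
    (hx : IntermediateField.adjoin F {x} = ⊤) (hy : IntermediateField.adjoin K {y} = ⊤)
    (hdim : Module.finrank F E = Module.finrank K L)
    (hmin : (minpoly F x).map φ = minpoly K y) (p : F[X]) :
    φ (Algebra.norm F (aeval x p)) = Algebra.norm K (aeval y (p.map φ)) := by
  rw [norm_aeval_of_adjoin x hx, norm_aeval_of_adjoin y hy, RingHom.map_det,
    map_aeval_eq_aeval_map (φ := φ), companionMatrix_map, hmin, hdim]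
  ext a i j
  simp [Matrix.algebraMap_matrix_apply, apply_ite φ]

/-- If a polynomial over `F` vanishing at `x` stays irreducible over `K`, then the minimal polynomial
of `x` over `F` is, over `K`, the minimal polynomial of every root of the given polynomial. -/
lemma map_minpoly_eq {F K E L : Type*} [Field F] [Field K] [Field E] [Field L]
    [Algebra F E] [Algebra K L] [FiniteDimensional F E]
    (φ : F →+* K) (x : E) (y : L) (f : F[X]) (hf : Irreducible (f.map φ))
    (hx : aeval x f = 0) (hy : aeval y (f.map φ) = 0) :
    (minpoly F x).map φ = minpoly K y := by
  have hint : IsIntegral F x := .of_finite F x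
  obtain ⟨q, hq⟩ := minpoly.dvd F x hx
  have hmon : ((minpoly F x).map φ).Monic := (minpoly.monic hint).map φ
  have hmul : f.map φ = (minpoly F x).map φ * q.map φ := by rw [hq, Polynomial.map_mul]
  have hnu : ¬ IsUnit ((minpoly F x).map φ) := by
    intro h
    have h0 := natDegree_eq_zero_of_isUnit h
    rw [natDegree_map] at h0
    exact (minpoly.natDegree_pos hint).ne' h0
  have hqu : IsUnit (q.map φ) := (hf.isUnit_or_isUnit hmul).resolve_left hnu
  apply minpoly.eq_of_irreducible_of_monic _ _ hmon
  · have hass : Associated ((minpoly F x).map φ) (f.map φ) := ⟨hqu.unit, by rw [hmul]; rfl⟩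
    exact hass.symm.irreducible hf
  · rw [hmul, map_mul] at hy
    exact (mul_eq_zero.mp hy).resolve_right (hqu.map (aeval y)).ne_zero

/-- Reduction of a polynomial expression of degree at most `2d - 2` modulo `y ^ d = b y + c`. The
coefficient `o r` belongs to `y ^ (d + r)`, and `o'` is the sequence `o` shifted up by one, starting
with zero. -/
lemma reduce_sum {L : Type*} [CommRing L] (d : ℕ) (y b c : L)
    (hy : y ^ d = b * y + c) (B e o o' : ℕ → L)
    (he : ∀ r < d, B r = e r) (ho : ∀ r < d, B (d + r) = o r)
    (hlast : ∀ r, r + 1 = d → o r = 0)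
    (ho0 : o' 0 = 0) (ho' : ∀ r, o' (r + 1) = o r) :
    ∑ s ∈ Finset.range (d + d), B s * y ^ s =
      ∑ r ∈ Finset.range d, (e r + c * o r + b * o' r) * y ^ r := by
  have hshift : ∑ r ∈ Finset.range d, o' r * y ^ r = ∑ r ∈ Finset.range d, o r * y ^ (r + 1) := by
    cases d with
    | zero => simp
    | succ m =>
      rw [Finset.sum_range_succ', Finset.sum_range_succ, ho0, hlast m rfl]
      simp [ho']
  have h1 : ∑ r ∈ Finset.range d, B r * y ^ r = ∑ r ∈ Finset.range d, e r * y ^ r :=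
    Finset.sum_congr rfl fun r hr => by rw [he r (Finset.mem_range.mp hr)]
  have h2 : ∑ r ∈ Finset.range d, B (d + r) * y ^ (d + r) =
      ∑ r ∈ Finset.range d, (c * (o r * y ^ r) + b * (o r * y ^ (r + 1))) :=
    Finset.sum_congr rfl fun r hr => by
      rw [ho r (Finset.mem_range.mp hr), pow_add, hy]; ring
  rw [Finset.sum_range_add, h1, h2, Finset.sum_add_distrib, ← Finset.mul_sum, ← Finset.mul_sum,
    ← hshift, Finset.mul_sum, Finset.mul_sum, ← Finset.sum_add_distrib, ← Finset.sum_add_distrib]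
  exact Finset.sum_congr rfl fun r _ => by ring

/-- The coefficient of `X ^ s` in `(∑_{i<d} z_i X ^ i) (∑_{j<d} w_j X ^ j)`. -/
def convCoeff {K : Type*} [CommRing K] (d : ℕ) (z w : ℕ → K) (s : ℕ) : K :=
  ∑ p ∈ (Finset.range d ×ˢ Finset.range d).filter (fun p => p.1 + p.2 = s), z p.1 * w p.2

lemma convCoeff_comm {K : Type*} [CommRing K] (d : ℕ) (z w : ℕ → K) (s : ℕ) :
    convCoeff d z w s = convCoeff d w z s := by
  refine Finset.sum_nbij' Prod.swap Prod.swap ?_ ?_ ?_ ?_ ?_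
  · simp only [Finset.mem_filter, Finset.mem_product, Prod.fst_swap, Prod.snd_swap]
    grind
  · simp only [Finset.mem_filter, Finset.mem_product, Prod.fst_swap, Prod.snd_swap]
    grind
  · simp
  · simp
  · intro p _
    simp [mul_comm]

lemma convCoeff_eq_zero {K : Type*} [CommRing K] (d : ℕ) (z w : ℕ → K) (s : ℕ)
    (hs : 2 * d ≤ s + 1) : convCoeff d z w s = 0 := by
  apply Finset.sum_eq_zero
  simp only [Finset.mem_filter, Finset.mem_product, Finset.mem_range]
  intro p hp
  omega

lemma mul_eq_sum_convCoeff {K L : Type*} [CommRing K] [CommRing L] [Algebra K L] (d : ℕ)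
    (z w : ℕ → K) (y : L) :
    (∑ i ∈ Finset.range d, algebraMap K L (z i) * y ^ i) *
        (∑ i ∈ Finset.range d, algebraMap K L (w i) * y ^ i) =
      ∑ s ∈ Finset.range (d + d), algebraMap K L (convCoeff d z w s) * y ^ s := by
  rw [Finset.sum_mul_sum, ← Finset.sum_product',
    ← Finset.sum_fiberwise_of_maps_to (t := Finset.range (d + d)) (g := fun p => p.1 + p.2)]
  · refine Finset.sum_congr rfl fun s _ => ?_
    rw [convCoeff, map_sum, Finset.sum_mul]
    refine Finset.sum_congr rfl fun p hp => ?_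
    rw [← (Finset.mem_filter.mp hp).2, map_mul, pow_add]
    ring
  · simp only [Finset.mem_product, Finset.mem_range]
    intro p hp
    omega

lemma quadratic_univ {F K : Type*} [Field F] [Field K] [Algebra F K] [FiniteDimensional F K]
    [IsGalois F K] (hK2 : Module.finrank F K = 2) (σ : K ≃ₐ[F] K) (hσ : σ ≠ 1) (τ : K ≃ₐ[F] K) :
    τ = 1 ∨ τ = σ := by
  classical
  have hcard : Nat.card (K ≃ₐ[F] K) = 2 := by rw [IsGalois.card_aut_eq_finrank, hK2]
  rw [Nat.card_eq_fintype_card] at hcard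
  have huniv : ({1, σ} : Finset (K ≃ₐ[F] K)) = Finset.univ := by
    rw [← Finset.card_eq_iff_eq_univ, Finset.card_pair hσ.symm, hcard]
  have := huniv ▸ Finset.mem_univ τ
  simpa using this

lemma quadratic_invol {F K : Type*} [Field F] [Field K] [Algebra F K] [FiniteDimensional F K]
    [IsGalois F K] (hK2 : Module.finrank F K = 2) (σ : K ≃ₐ[F] K) (hσ : σ ≠ 1) (x : K) :
    σ (σ x) = x := by
  rcases quadratic_univ hK2 σ hσ (σ * σ) with h | h
  · exact DFunLike.congr_fun h x
  · exact absurd (mul_eq_left.mp h) hσ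

lemma quadratic_norm {F K : Type*} [Field F] [Field K] [Algebra F K] [FiniteDimensional F K]
    [IsGalois F K] (hK2 : Module.finrank F K = 2) (σ : K ≃ₐ[F] K) (hσ : σ ≠ 1) (x : K) :
    algebraMap F K (Algebra.norm F x) = x * σ x := by
  classical
  have huniv : (Finset.univ : Finset (K ≃ₐ[F] K)) = {1, σ} := by
    ext τ
    simpa using quadratic_univ hK2 σ hσ τ
  rw [Algebra.norm_eq_prod_automorphisms, huniv, Finset.prod_pair hσ.symm]
  rfl

lemma exists_algebraMap_eq_convCoeff {F K : Type*} [Field F] [Field K] [Algebra F K]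
    [FiniteDimensional F K] [IsGalois F K] (hK2 : Module.finrank F K = 2) (σ : K ≃ₐ[F] K)
    (hσ : σ ≠ 1) (d : ℕ) (z : ℕ → K) (s : ℕ) :
    ∃ a : F, algebraMap F K a = convCoeff d z (fun i => σ (z i)) s := by
  refine (IsGalois.mem_range_algebraMap_iff_fixed _).mpr fun τ => ?_
  rcases quadratic_univ hK2 σ hσ τ with rfl | rfl
  · rfl
  · conv_rhs => rw [convCoeff_comm]
    simp only [convCoeff, map_sum, map_mul, quadratic_invol hK2 τ hσ]

/-- **Explicit norm computation for the norm form of `E = F(α)`, `α^d = bα + c`, over a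
quadratic Galois extension `K/F`.**  With `σ` the nontrivial `F`-automorphism of `K` and
`X^d - bX - c` still irreducible over `K` (so that `L = K(α)` has degree `d` over `K`),
for `z_1, …, z_d ∈ K` (indexed here as `z 0, …, z (d-1)`) the quantities
`A_{2r} = ∑_{i+j=r} z_i σ(z_j)` (`0 ≤ r ≤ d-1`), `A_{2r+1} = ∑_{i+j=d+r} z_i σ(z_j)`
(`0 ≤ r ≤ d-2`) lie in `F`, and with the conventions `A_{-1} = 0`, `A_{2d-1} = 0`:
`N_{K/F}(N_{K(α)/K}(∑ z_i α^i)) =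
  N_{E/F}(∑_{r<d} (A_{2r} + c A_{2r+1} + b A_{2r-1}) α^r)`,
which in particular is a value of `N_{E/F}`. -/
theorem norm_identity_trinomial_case
    (F E K L : Type*) [Field F] [Field E] [Field K] [Field L]
    [Algebra F E] [Algebra F K] [Algebra K L] [Algebra F L] [IsScalarTower F K L]
    [FiniteDimensional F E] [FiniteDimensional F K] [FiniteDimensional K L]
    (d : ℕ) (b c : F)
    (α : E) (hαgen : IntermediateField.adjoin F {α} = ⊤)
    (hαpow : α ^ d = algebraMap F E b * α + algebraMap F E c)
    (hEdeg : Module.finrank F E = d)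
    [IsGalois F K] (hK2 : Module.finrank F K = 2)
    (σ : K ≃ₐ[F] K) (hσ : σ ≠ 1)
    (hirr : Irreducible (X ^ d - C (algebraMap F K b) * X - C (algebraMap F K c)))
    (β : L) (hβgen : IntermediateField.adjoin K {β} = ⊤)
    (hβpow : β ^ d = algebraMap F L b * β + algebraMap F L c)
    (hLdeg : Module.finrank K L = d)
    (z : ℕ → K) :
    ∃ A : ℤ → F,
      (∀ r : ℕ, r < d →
        algebraMap F K (A (2 * (r : ℤ))) =
          ∑ p ∈ (Finset.range d ×ˢ Finset.range d).filter (fun p => p.1 + p.2 = r),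
            z p.1 * σ (z p.2)) ∧
      (∀ r : ℕ, r + 2 ≤ d →
        algebraMap F K (A (2 * (r : ℤ) + 1)) =
          ∑ p ∈ (Finset.range d ×ˢ Finset.range d).filter (fun p => p.1 + p.2 = d + r),
            z p.1 * σ (z p.2)) ∧
      A (-1) = 0 ∧ A (2 * (d : ℤ) - 1) = 0 ∧
      Algebra.norm F
          (Algebra.norm K (∑ i ∈ Finset.range d, algebraMap K L (z i) * β ^ i)) =
        Algebra.norm F
          (∑ r ∈ Finset.range d,
            algebraMap F E
                (A (2 * (r : ℤ)) + c * A (2 * (r : ℤ) + 1) + b * A (2 * (r : ℤ) - 1)) *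
              α ^ r) := by
  choose a ha using exists_algebraMap_eq_convCoeff hK2 σ hσ d z
  have ha0 : ∀ s, 2 * d ≤ s + 1 → a s = 0 := fun s hs =>
    (algebraMap F K).injective (by rw [ha, convCoeff_eq_zero d _ _ s hs, map_zero])
  let A : ℤ → F := fun n =>
    if n < 0 then 0 else if n % 2 = 0 then a (n / 2).toNat else a (d + (n / 2).toNat)
  have hAe : ∀ r : ℕ, A (2 * (r : ℤ)) = a r := by
    intro r
    have h1 : ¬ (2 * (r : ℤ) < 0) := by omega
    have h2 : (2 * (r : ℤ)) % 2 = 0 := by omega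
    have h3 : (2 * (r : ℤ) / 2).toNat = r := by omega
    simp only [A, if_neg h1, if_pos h2, h3]
  have hAo : ∀ r : ℕ, A (2 * (r : ℤ) + 1) = a (d + r) := by
    intro r
    have h1 : ¬ (2 * (r : ℤ) + 1 < 0) := by omega
    have h2 : ¬ (2 * (r : ℤ) + 1) % 2 = 0 := by omega
    have h3 : ((2 * (r : ℤ) + 1) / 2).toNat = r := by omega
    simp only [A, if_neg h1, if_neg h2, h3]
  have hAs : ∀ r : ℕ, A (2 * ((r + 1 : ℕ) : ℤ) - 1) = a (d + r) := by
    intro r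
    rw [← hAo]
    congr 1
    push_cast
    ring
  have hAneg : A (-1) = 0 := if_pos (by norm_num)
  have hd : 0 < d := hEdeg ▸ Module.finrank_pos
  refine ⟨A, fun r _ => by rw [hAe, ha]; rfl, fun r _ => by rw [hAo, ha]; rfl, hAneg, ?_, ?_⟩
  · obtain ⟨m, rfl⟩ : ∃ m, d = m + 1 := ⟨d - 1, by omega⟩
    rw [hAs]
    exact ha0 _ (by omega)
  have hmin : (minpoly F α).map (algebraMap F K) = minpoly K β := by
    have hmap : (X ^ d - C b * X - C c : F[X]).map (algebraMap F K) =
        X ^ d - C (algebraMap F K b) * X - C (algebraMap F K c) := by simp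
    refine map_minpoly_eq (algebraMap F K) α β (X ^ d - C b * X - C c) ?_ ?_ ?_
    · rwa [hmap]
    · simp [hαpow]
    · simp [hβpow, ← IsScalarTower.algebraMap_apply]
  have hminσ : (minpoly K β).map (σ : K →+* K) = minpoly K β := by
    rw [← hmin, Polynomial.map_map]
    congr 1
    ext x
    simp
  have hσnorm : σ (Algebra.norm K (∑ i ∈ Finset.range d, algebraMap K L (z i) * β ^ i)) =
      Algebra.norm K (∑ i ∈ Finset.range d, algebraMap K L (σ (z i)) * β ^ i) := by
    have h := map_norm_aeval (σ : K →+* K) β β hβgen hβgen rfl hminσ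
      (∑ i ∈ Finset.range d, C (z i) * X ^ i)
    simpa [Polynomial.map_sum] using h
  have hprod : (∑ i ∈ Finset.range d, algebraMap K L (z i) * β ^ i) *
        (∑ i ∈ Finset.range d, algebraMap K L (σ (z i)) * β ^ i) =
      ∑ r ∈ Finset.range d, algebraMap F L
        (A (2 * (r : ℤ)) + c * A (2 * (r : ℤ) + 1) + b * A (2 * (r : ℤ) - 1)) * β ^ r := by
    rw [mul_eq_sum_convCoeff d z (fun i => σ (z i)) β]
    simp only [← ha, ← IsScalarTower.algebraMap_apply, map_add, map_mul]
    refine reduce_sum d β _ _ hβpow (fun s => algebraMap F L (a s))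
      (fun r => algebraMap F L (A (2 * (r : ℤ)))) (fun r => algebraMap F L (A (2 * (r : ℤ) + 1)))
      (fun r => algebraMap F L (A (2 * (r : ℤ) - 1))) ?_ ?_ ?_ ?_ ?_
    · intro r _
      simp only [hAe]
    · intro r _
      simp only [hAo]
    · intro r hr
      simp only [hAo]
      rw [ha0 _ (by omega), map_zero]
    · simp [hAneg]
    · intro r
      simp only [hAs, hAo]
  apply (algebraMap F K).injective
  rw [quadratic_norm hK2 σ hσ, hσnorm, ← map_mul, hprod]
  have h := map_norm_aeval (algebraMap F K) α β hαgen hβgen (hEdeg.trans hLdeg.symm) hmin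
    (∑ r ∈ Finset.range d,
      C (A (2 * (r : ℤ)) + c * A (2 * (r : ℤ) + 1) + b * A (2 * (r : ℤ) - 1)) * X ^ r)
  simp only [Polynomial.map_sum, Polynomial.map_mul, Polynomial.map_pow, map_X, map_C, map_sum,
    map_mul, map_pow, aeval_X, aeval_C, ← IsScalarTower.algebraMap_apply] at h
  simpa only [map_add, map_mul] using h.symm
end

section
/- Let F be a field, let E = F(α) be a field extension of F of prime degree p, and let φ = N_{E/F} be its norm form. Then φ satisfies Scharlau's norm principle for every finite Galois field extension K/F: if a ∈ K^× is a similarity factor of the extended form N_{(K⊗_F E)/K}, then N_{K/F}(a) is a similarity factor of N_{E/F}. -/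
/-!
The norm form represents `1`, so a similarity factor `a` of the extended form is itself a norm:
`a = N_{(K ⊗ E)/K}(z)` with `z = g 1`. Transitivity of the norm (`Algebra.norm_norm`) along both
`F → K → K ⊗ E` and `F → E → K ⊗ E` gives
`N_{K/F}(a) = N_{(K ⊗ E)/F}(z) = N_{E/F}(y)` with `y = N_{(K ⊗ E)/E}(z)`.
As `a ≠ 0`, also `y ≠ 0`, and multiplication by `y` on `E` has multiplier `N_{E/F}(y)`.
-/

open TensorProduct

/-- **Scharlau's norm principle for the norm form of a simple extension `E = F(α)` of prime
degree `p`, for finite Galois extensions `K/F`.**  If `a ∈ K^×` is a similarity factor of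
the extended norm form `N_{(K⊗E)/K}`, then `N_{K/F}(a)` is a similarity factor of
`N_{E/F}`. -/
theorem snp_prime_degree_galois
    (F E K : Type*) [Field F] [Field E] [Field K]
    [Algebra F E] [Algebra F K] [FiniteDimensional F E] [FiniteDimensional F K]
    (p : ℕ) (hp : p.Prime)
    (α : E) (hαgen : IntermediateField.adjoin F {α} = ⊤)
    (hEdeg : Module.finrank F E = p)
    [IsGalois F K] :
    ∀ a : K, a ≠ 0 →
      (∃ g : (K ⊗[F] E) ≃ₗ[K] (K ⊗[F] E),
        ∀ z : K ⊗[F] E, Algebra.norm K (g z) = a * Algebra.norm K z) →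
      ∃ h : E ≃ₗ[F] E,
        ∀ x : E, Algebra.norm F (h x) = Algebra.norm F a * Algebra.norm F x := by
  intro a ha ⟨g, hg⟩
  -- `K ⊗[F] E` as an algebra over its right factor; this is not a global instance.
  let : Algebra E (K ⊗[F] E) := Algebra.TensorProduct.rightAlgebra
  have hz : Algebra.norm K (g 1) = a := by rw [hg, map_one, mul_one]
  have hy : Algebra.norm F (Algebra.norm E (g 1)) = Algebra.norm F a := by
    rw [Algebra.norm_norm, ← Algebra.norm_norm (S := K), hz]
  have hy0 : Algebra.norm E (g 1) ≠ 0 := by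
    intro h0
    rw [h0, Algebra.norm_zero] at hy
    exact ha (Algebra.norm_eq_zero_iff.mp hy.symm)
  refine ⟨LinearEquiv.ofBijective (LinearMap.mulLeft F (Algebra.norm E (g 1)))
    (mulLeft_bijective₀ _ hy0), fun x => ?_⟩
  change Algebra.norm F (Algebra.norm E (g 1) * x) = _
  rw [map_mul, hy]
end

section
/- Let F be a field, let φ_1 be a form of degree d_1 in n variables over F, let m ≥ 2 be an integer, and assume char F = 0 or char F > d_1·m. Suppose that for every finite field extension K/F one has D_K(φ_1) = G_K(φ_1), and that φ_1 satisfies Scharlau's norm principle for every finite field extension of F. Then the form φ = φ_1^m (of degree d_1·m) satisfies Scharlau's norm principle for every finite field extension K/F: if a ∈ G_K(φ) then N_{K/F}(a) ∈ G_F(φ). -/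
/-!
If `φ₁` takes a nonzero value `b = φ₁(v)` over `K` and `φ₁(g x)^m = a φ₁(x)^m`, then with
`c = φ₁(g v)` one has `a = (c / b)^m`. Both `b` and `c` are represented by `φ₁`, hence, by `D = G`,
lie in the group `G_K(φ₁)`, and so does `c / b`. The norm principle for `φ₁` gives
`N(c / b) ∈ G_F(φ₁)`, and raising the similarity to the `m`-th power gives
`N(a) = N(c / b)^m ∈ G_F(φ₁^m)`.

If `φ₁` vanishes identically on `K^n`, then it does so on `F^n`, and the identity is a similarity
with any factor.
-/

/-- `a` is a similarity factor of the form given by the homogeneous polynomial `φ`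
in `n` variables over `K`: there is a `K`-linear bijection `g` of `K^n` with
`φ(g v) = a · φ(v)` for all `v`. -/
def IsSimilarityFactor {K : Type*} [Field K] {n : ℕ}
    (φ : MvPolynomial (Fin n) K) (a : K) : Prop :=
  ∃ g : (Fin n → K) ≃ₗ[K] (Fin n → K),
    ∀ v : Fin n → K, MvPolynomial.eval (g v) φ = a * MvPolynomial.eval v φ

theorem IsSimilarityFactor.div {K : Type*} [Field K] {n : ℕ} {φ : MvPolynomial (Fin n) K}
    {a b : K} (ha : IsSimilarityFactor φ a) (hb : IsSimilarityFactor φ b) (hb0 : b ≠ 0) :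
    IsSimilarityFactor φ (a / b) := by
  obtain ⟨g, hg⟩ := ha
  obtain ⟨h, hh⟩ := hb
  refine ⟨h.symm.trans g, fun v => ?_⟩
  have h1 := hh (h.symm v)
  rw [LinearEquiv.apply_symm_apply] at h1
  rw [LinearEquiv.trans_apply, hg, h1]
  field_simp

theorem IsSimilarityFactor.pow {K : Type*} [Field K] {n : ℕ} {φ : MvPolynomial (Fin n) K}
    {a : K} (ha : IsSimilarityFactor φ a) (m : ℕ) : IsSimilarityFactor (φ ^ m) (a ^ m) := by
  obtain ⟨g, hg⟩ := ha
  exact ⟨g, fun v => by rw [map_pow, map_pow, hg, mul_pow]⟩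

/-- **SNP for `m`-th powers of forms (with `D = G`).**  Let `φ₁` be a form of degree `d₁`
in `n` variables over `F` (`char F = 0` or `char F > d₁·m`, `m ≥ 2`) such that
`D_K(φ₁) = G_K(φ₁)` for every finite extension `K/F` and such that `φ₁` satisfies
Scharlau's norm principle for every finite extension of `F`.  Then `φ = φ₁^m` satisfies
Scharlau's norm principle for every finite extension `K/F`. -/
theorem snp_pow_of_repr_eq_sim
    {F : Type u} [Field F] (n d₁ m : ℕ) (hm : 2 ≤ m)
    (hchar : ringChar F = 0 ∨ d₁ * m < ringChar F)
    (φ₁ : MvPolynomial (Fin n) F) (hhom : φ₁.IsHomogeneous d₁)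
    (hDG : ∀ (K : Type u) [Field K] [Algebra F K] [FiniteDimensional F K],
      ∀ a : K, a ≠ 0 →
        ((∃ v : Fin n → K, MvPolynomial.eval v (φ₁.map (algebraMap F K)) = a) ↔
          IsSimilarityFactor (φ₁.map (algebraMap F K)) a))
    (hSNP : ∀ (K : Type u) [Field K] [Algebra F K] [FiniteDimensional F K],
      ∀ a : K, a ≠ 0 → IsSimilarityFactor (φ₁.map (algebraMap F K)) a →
        IsSimilarityFactor φ₁ (Algebra.norm F a))
    (K : Type u) [Field K] [Algebra F K] [FiniteDimensional F K]
    (a : K) (ha : a ≠ 0)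
    (hG : IsSimilarityFactor ((φ₁ ^ m).map (algebraMap F K)) a) :
    IsSimilarityFactor (φ₁ ^ m) (Algebra.norm F a) := by
  have hm0 : m ≠ 0 := by omega
  rw [map_pow] at hG
  by_cases hv : ∃ v : Fin n → K, MvPolynomial.eval v (φ₁.map (algebraMap F K)) ≠ 0
  · obtain ⟨v, hb⟩ := hv
    obtain ⟨g, hg⟩ := hG
    have hgv := hg v
    rw [map_pow, map_pow] at hgv
    set b := MvPolynomial.eval v (φ₁.map (algebraMap F K)) with hbdef
    set c := MvPolynomial.eval (g v) (φ₁.map (algebraMap F K)) with hcdef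
    have hc : c ≠ 0 := by
      intro hc
      rw [hc, zero_pow hm0] at hgv
      exact mul_ne_zero ha (pow_ne_zero m hb) hgv.symm
    have hquot : a = (c / b) ^ m := by
      rw [div_pow, hgv, mul_div_cancel_right₀ _ (pow_ne_zero m hb)]
    have hsim := ((hDG K c hc).1 ⟨g v, rfl⟩).div ((hDG K b hb).1 ⟨v, rfl⟩) hb
    rw [hquot, map_pow]
    exact (hSNP K (c / b) (div_ne_zero hc hb) hsim).pow m
  · push Not at hv
    have hF : ∀ v : Fin n → F, MvPolynomial.eval v φ₁ = 0 := fun v => by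
      apply (algebraMap F K).injective
      rw [map_zero, ← hv (algebraMap F K ∘ v), MvPolynomial.eval_map, MvPolynomial.eval₂_comp]
    refine ⟨LinearEquiv.refl F _, fun v => ?_⟩
    rw [map_pow, map_pow, hF, hF, zero_pow hm0, mul_zero]
end

section
/- Let F be a field and let φ_1, φ_2 be forms over F of degrees d_1 and d_2 in n_1 and n_2 variables respectively (with char F = 0 or char F > d_1 + d_2). Suppose that both φ_1 and φ_2 satisfy Scharlau's norm principle for every finite field extension of F, and that D_K(φ_i) = G_K(φ_i) for i = 1, 2 and every finite field extension K/F. Then the product form φ of degree d_1 + d_2 in n_1 + n_2 variables, defined by φ(u_1, u_2) = φ_1(u_1)·φ_2(u_2) for u_1 ∈ F^{n_1}, u_2 ∈ F^{n_2}, satisfies Scharlau's norm principle for every finite field extension K/F: if a ∈ G_K(φ) then N_{K/F}(a) ∈ G_F(φ). -/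
theorem isSimilarityFactor_one {K : Type*} [Field K] {n : ℕ} (φ : MvPolynomial (Fin n) K) :
    IsSimilarityFactor φ 1 :=
  ⟨LinearEquiv.refl K _, fun v => by simp⟩

/-- The block-diagonal bijection `g₁ ⊕ g₂` multiplies the product form by `b * c`. -/
theorem isSimilarityFactor_product {F : Type*} [Field F] {n₁ n₂ : ℕ}
    {φ₁ : MvPolynomial (Fin n₁) F} {φ₂ : MvPolynomial (Fin n₂) F} {b c : F}
    (hb : IsSimilarityFactor φ₁ b) (hc : IsSimilarityFactor φ₂ c) :
    IsSimilarityFactor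
      ((MvPolynomial.rename (Fin.castAdd n₂) φ₁) *
        (MvPolynomial.rename (Fin.natAdd n₁) φ₂)) (b * c) := by
  obtain ⟨g₁, h₁⟩ := hb
  obtain ⟨g₂, h₂⟩ := hc
  let e : (Fin (n₁ + n₂) → F) ≃ₗ[F] (Fin n₁ → F) × (Fin n₂ → F) :=
    (LinearEquiv.funCongrLeft F F finSumFinEquiv).trans
      (LinearEquiv.sumArrowLequivProdArrow (Fin n₁) (Fin n₂) F F)
  have he : ∀ v, e v = (v ∘ Fin.castAdd n₂, v ∘ Fin.natAdd n₁) := fun v => rfl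
  refine ⟨(e.trans (LinearEquiv.prodCongr g₁ g₂)).trans e.symm, fun v => ?_⟩
  set w := ((e.trans (LinearEquiv.prodCongr g₁ g₂)).trans e.symm) v with hw
  have hew : e w = (g₁ (v ∘ Fin.castAdd n₂), g₂ (v ∘ Fin.natAdd n₁)) := by
    simp [hw, he v]
  rw [he w, Prod.mk.injEq] at hew
  simp only [map_mul, MvPolynomial.eval_rename, hew.1, hew.2, h₁, h₂]
  ring

/-- **SNP for products of forms.**  Let `φ₁, φ₂` be forms of degrees `d₁, d₂` in `n₁, n₂`
variables over `F` (`char F = 0` or `char F > d₁ + d₂`), each satisfying Scharlau's norm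
principle for every finite extension of `F`, and with `D_K(φᵢ) = G_K(φᵢ)` for every finite
extension `K/F`.  Then the product form `φ(u₁, u₂) = φ₁(u₁)·φ₂(u₂)` of degree `d₁ + d₂` in
`n₁ + n₂` variables satisfies Scharlau's norm principle for every finite extension
`K/F`. -/
theorem snp_product_of_forms
    {F : Type u} [Field F] (n₁ n₂ d₁ d₂ : ℕ)
    (hchar : ringChar F = 0 ∨ d₁ + d₂ < ringChar F)
    (φ₁ : MvPolynomial (Fin n₁) F) (φ₂ : MvPolynomial (Fin n₂) F)
    (hhom₁ : φ₁.IsHomogeneous d₁) (hhom₂ : φ₂.IsHomogeneous d₂)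
    (hSNP₁ : ∀ (K : Type u) [Field K] [Algebra F K] [FiniteDimensional F K],
      ∀ a : K, a ≠ 0 → IsSimilarityFactor (φ₁.map (algebraMap F K)) a →
        IsSimilarityFactor φ₁ (Algebra.norm F a))
    (hSNP₂ : ∀ (K : Type u) [Field K] [Algebra F K] [FiniteDimensional F K],
      ∀ a : K, a ≠ 0 → IsSimilarityFactor (φ₂.map (algebraMap F K)) a →
        IsSimilarityFactor φ₂ (Algebra.norm F a))
    (hDG₁ : ∀ (K : Type u) [Field K] [Algebra F K] [FiniteDimensional F K],
      ∀ a : K, a ≠ 0 →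
        ((∃ v : Fin n₁ → K, MvPolynomial.eval v (φ₁.map (algebraMap F K)) = a) ↔
          IsSimilarityFactor (φ₁.map (algebraMap F K)) a))
    (hDG₂ : ∀ (K : Type u) [Field K] [Algebra F K] [FiniteDimensional F K],
      ∀ a : K, a ≠ 0 →
        ((∃ v : Fin n₂ → K, MvPolynomial.eval v (φ₂.map (algebraMap F K)) = a) ↔
          IsSimilarityFactor (φ₂.map (algebraMap F K)) a))
    (K : Type u) [Field K] [Algebra F K] [FiniteDimensional F K]
    (a : K) (ha : a ≠ 0)
    (hG : IsSimilarityFactor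
      (((MvPolynomial.rename (Fin.castAdd n₂) φ₁) *
        (MvPolynomial.rename (Fin.natAdd n₁) φ₂)).map (algebraMap F K)) a) :
    IsSimilarityFactor
      ((MvPolynomial.rename (Fin.castAdd n₂) φ₁) *
        (MvPolynomial.rename (Fin.natAdd n₁) φ₂)) (Algebra.norm F a) := by
  obtain ⟨v₁, hv₁⟩ := (hDG₁ K 1 one_ne_zero).2 (isSimilarityFactor_one _)
  obtain ⟨v₂, hv₂⟩ := (hDG₂ K 1 one_ne_zero).2 (isSimilarityFactor_one _)
  obtain ⟨g, hg⟩ := hG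
  have h := hg (Fin.append v₁ v₂)
  have e₁ : Fin.append v₁ v₂ ∘ Fin.castAdd n₂ = v₁ := by ext; simp
  have e₂ : Fin.append v₁ v₂ ∘ Fin.natAdd n₁ = v₂ := by ext; simp
  simp only [map_mul, MvPolynomial.map_rename, MvPolynomial.eval_rename, e₁, e₂, hv₁, hv₂,
    mul_one] at h
  rw [← h] at ha ⊢
  rw [map_mul]
  exact isSimilarityFactor_product
    (hSNP₁ K _ (left_ne_zero_of_mul ha) ((hDG₁ K _ (left_ne_zero_of_mul ha)).1 ⟨_, rfl⟩))
    (hSNP₂ K _ (right_ne_zero_of_mul ha) ((hDG₂ K _ (right_ne_zero_of_mul ha)).1 ⟨_, rfl⟩))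
end

section
/- Let F be a field of characteristic 0 or greater than 3, let F'/F be a field extension of degree 3, and let φ = N_{F'/F} be its norm form. Then φ satisfies Scharlau's norm principle for: (i) every finite Galois field extension K/F; (ii) every finite field extension K/F whose degree is a power of 3; and (iii) every finite field extension K/F whose degree is coprime to 3. That is, in each of these cases, if a ∈ K^× is a similarity factor of the extended form N_{(K⊗_F F')/K}, then N_{K/F}(a) is a similarity factor of N_{F'/F}. -/
open TensorProduct

/-!
A similarity factor `a` of a norm form is represented by it: evaluating the similarity at `1`
gives `a = N(g 1)`. Conversely, a nonzero value `N(y)` is a similarity factor, through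
multiplication by `y`. So Scharlau's norm principle says that `N_{K/F}` maps norms from `K ⊗ F'`
to norms from `F'`, which is transitivity of the norm in the two towers `F → K → K ⊗ F'` and
`F → F' → K ⊗ F'`: `N_{K/F}(N_{(K ⊗ F')/K}(z)) = N_{F'/F}(N_{(K ⊗ F')/F'}(z))`.
-/

/-- **SNP for the norm form of a cubic field extension.**  Let `F` have characteristic `0`
or `> 3` and let `F'/F` be a field extension of degree `3`, with norm form
`φ = N_{F'/F}`.  Then `φ` satisfies Scharlau's norm principle for every finite extension
`K/F` that is (i) Galois, or (ii) of degree a power of `3`, or (iii) of degree coprime to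
`3`: if `a ∈ K^×` is a similarity factor of the extended form `N_{(K⊗F')/K}`, then
`N_{K/F}(a)` is a similarity factor of `N_{F'/F}`. -/
theorem snp_cubic_norm_form
    {F F' : Type u} [Field F] [Field F'] [Algebra F F']
    (hchar : ringChar F = 0 ∨ 3 < ringChar F)
    (hdeg : Module.finrank F F' = 3) :
    ∀ (K : Type u) [Field K] [Algebra F K] [FiniteDimensional F K],
      (IsGalois F K ∨ (∃ r : ℕ, Module.finrank F K = 3 ^ r) ∨
        Nat.Coprime (Module.finrank F K) 3) →
      ∀ a : K, a ≠ 0 →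
        (∃ g : (K ⊗[F] F') ≃ₗ[K] (K ⊗[F] F'),
          ∀ z : K ⊗[F] F', Algebra.norm K (g z) = a * Algebra.norm K z) →
        ∃ h : F' ≃ₗ[F] F',
          ∀ x : F', Algebra.norm F (h x) = Algebra.norm F a * Algebra.norm F x := by
  intro K _ _ _ _ a ha hg
  obtain ⟨g, hg⟩ := hg
  let : Algebra F' (K ⊗[F] F') := Algebra.TensorProduct.rightAlgebra
  have : FiniteDimensional F F' := Module.finite_of_finrank_pos (by omega)
  have : IsScalarTower F F' (K ⊗[F] F') := inferInstance
  have : Module.Finite F' (K ⊗[F] F') := Module.Finite.of_restrictScalars_finite F F' _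
  have key : Algebra.norm F a = Algebra.norm F (Algebra.norm F' (g 1)) := by
    have h1 := hg 1
    rw [map_one (Algebra.norm K), mul_one] at h1
    rw [← h1, Algebra.norm_norm, Algebra.norm_norm]
  have hy : Algebra.norm F' (g 1) ≠ 0 := by
    intro h0
    rw [h0, Algebra.norm_zero] at key
    exact ha (Algebra.norm_eq_zero_iff.mp key)
  refine ⟨LinearEquiv.smulOfUnit (Units.mk0 _ hy) |>.restrictScalars F, fun x => ?_⟩
  rw [key, ← map_mul]
  rfl
end

section
/- Let F be a field of characteristic different from 2, let F'/F be a separable quadratic field extension, and let φ be the quartic form on F' viewed as a 2-dimensional F-vector space defined by φ(x) = N_{F'/F}(x)^2. Then φ satisfies Scharlau's norm principle for every finite field extension K/F: if a ∈ K^× and there is a K-linear bijection g of K ⊗_F F' with (N_{(K⊗_F F')/K}(g z))^2 = a·(N_{(K⊗_F F')/K}(z))^2 for all z ∈ K ⊗_F F', then there is an F-linear bijection h of F' with N_{F'/F}(h x)^2 = N_{K/F}(a)·N_{F'/F}(x)^2 for all x ∈ F'. -/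
open TensorProduct

/-!
Evaluating the hypothesis at `z = 1` gives `a = N_{(K⊗F')/K}(w)²` with `w = g 1`. By transitivity
of the norm along both `F ⊆ K ⊆ K ⊗ F'` and `F ⊆ F' ⊆ K ⊗ F'`,
`N_{K/F}(N_{(K⊗F')/K}(w)) = N_{F'/F}(c)` where `c = N_{(K⊗F')/F'}(w)`.
Hence `N_{K/F}(a) = N_{F'/F}(c)²`, and multiplication by `c` is the required similarity.
-/

/-- **SNP for the square of the norm form of a separable quadratic extension.**
Let `char F ≠ 2`, let `F'/F` be a separable quadratic field extension, and let `φ` be the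
quartic form `x ↦ N_{F'/F}(x)²` on `F'` viewed as an `F`-vector space.  Then `φ` satisfies
Scharlau's norm principle for every finite extension `K/F`: if `a ∈ K^×` and there is a
`K`-linear bijection `g` of `K ⊗[F] F'` with `N_{(K⊗F')/K}(g z)² = a · N_{(K⊗F')/K}(z)²`
for all `z`, then there is an `F`-linear bijection `h` of `F'` with
`N_{F'/F}(h x)² = N_{K/F}(a) · N_{F'/F}(x)²` for all `x ∈ F'`. -/
theorem snp_square_of_quadratic_norm
    {F F' : Type u} [Field F] [Field F'] [Algebra F F']
    (hchar : ringChar F ≠ 2) [Algebra.IsSeparable F F']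
    (hdeg : Module.finrank F F' = 2)
    (K : Type u) [Field K] [Algebra F K] [FiniteDimensional F K]
    (a : K) (ha : a ≠ 0)
    (hg : ∃ g : (K ⊗[F] F') ≃ₗ[K] (K ⊗[F] F'),
      ∀ z : K ⊗[F] F',
        (Algebra.norm K (g z)) ^ 2 = a * (Algebra.norm K z) ^ 2) :
    ∃ h : F' ≃ₗ[F] F',
      ∀ x : F',
        (Algebra.norm F (h x)) ^ 2 = Algebra.norm F a * (Algebra.norm F x) ^ 2 := by
  obtain ⟨g, hg⟩ := hg
  have : FiniteDimensional F F' := Module.finite_of_finrank_pos (by omega)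
  set w := g 1 with hw
  have h1 : (Algebra.norm K w) ^ 2 = a := by simpa using hg 1
  -- In `F' ⊗[F] K` the left algebra structure is the one over `F'`, so `c` is the norm down to `F'`.
  set c : F' := Algebra.norm F' (Algebra.TensorProduct.comm F K F' w) with hc
  have h2 : Algebra.norm F (Algebra.norm K w) = Algebra.norm F c := by
    rw [hc, Algebra.norm_norm, Algebra.norm_norm]
    exact Algebra.norm_eq_of_algEquiv (Algebra.TensorProduct.comm F K F') w |>.symm
  have h3 : Algebra.norm F a = (Algebra.norm F c) ^ 2 := by rw [← h1, map_pow, h2]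
  have hc0 : c ≠ 0 := by
    intro h
    rw [h, Algebra.norm_zero, zero_pow two_ne_zero] at h3
    exact ha (Algebra.norm_eq_zero_iff.mp h3)
  refine ⟨LinearEquiv.smulOfNeZero F' F' c hc0 |>.restrictScalars F, fun x => ?_⟩
  simp [h3, mul_pow]
end

section
/- Let F be a field of characteristic 0 or greater than 3, and let φ be a nondegenerate cubic form in n variables over F which permits composition, i.e. there is an F-bilinear map ∗ : F^n × F^n → F^n with φ(v ∗ w) = φ(v)·φ(w) for all v, w ∈ F^n. Suppose φ is not isomorphic to the norm form of a cubic field extension of F, i.e. there is no field extension E/F of degree 3 together with an F-linear bijection f : F^n → E satisfying N_{E/F}(f(v)) = φ(v) for all v ∈ F^n. Then φ satisfies Scharlau's norm principle for every finite separable field extension K/F: if a ∈ G_K(φ) then N_{K/F}(a) ∈ G_F(φ). -/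
/-- The symmetric trilinear form `θ` associated (by full polarization) to a cubic form
`φ` on `F^n`:
`θ(v₁,v₂,v₃) = (1/3!)·∑_{∅ ≠ S ⊆ {1,2,3}} (-1)^{3-|S|} φ(∑_{i ∈ S} vᵢ)`. -/
noncomputable def cubicPolar {F : Type*} [Field F] {n : ℕ}
    (φ : MvPolynomial (Fin n) F) (v₁ v₂ v₃ : Fin n → F) : F :=
  (6 : F)⁻¹ *
    (MvPolynomial.eval (v₁ + v₂ + v₃) φ
      - MvPolynomial.eval (v₁ + v₂) φ - MvPolynomial.eval (v₁ + v₃) φ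
      - MvPolynomial.eval (v₂ + v₃) φ
      + MvPolynomial.eval v₁ φ + MvPolynomial.eval v₂ φ + MvPolynomial.eval v₃ φ)

/-! ### Norms of polynomials modulo a polynomial -/

namespace CubicComposition

section Norm
open Polynomial
variable {F : Type*} [Field F]

/-- The norm over `F` of the residue class of `f` in `F[X] / (q)`. For `q` monic it is the resultant of
`q` and `f`. -/
noncomputable def polyNorm (q f : F[X]) : F := Algebra.norm F (AdjoinRoot.mk q f)

lemma polyNorm_mul (q f g : F[X]) : polyNorm q (f * g) = polyNorm q f * polyNorm q g := by
  simp [polyNorm]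

lemma polyNorm_pow (q f : F[X]) (k : ℕ) : polyNorm q (f ^ k) = polyNorm q f ^ k := by
  simp [polyNorm]

lemma polyNorm_congr {q f g : F[X]} (h : q ∣ f - g) : polyNorm q f = polyNorm q g := by
  unfold polyNorm
  rw [AdjoinRoot.mk_eq_mk.2 h]

lemma polyNorm_C {q : F[X]} (hq : q ≠ 0) (x : F) : polyNorm q (C x) = x ^ q.natDegree := by
  unfold polyNorm
  rw [AdjoinRoot.mk_C, ← AdjoinRoot.algebraMap_eq,
    Algebra.norm_algebraMap_of_basis (AdjoinRoot.powerBasis hq).basis]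
  simp

lemma polyNorm_eq_zero_iff {q : F[X]} (hq : Irreducible q) (f : F[X]) :
    polyNorm q f = 0 ↔ q ∣ f := by
  have := Fact.mk hq
  have : Module.Finite F (AdjoinRoot q) := (AdjoinRoot.powerBasis hq.ne_zero).finite
  unfold polyNorm
  rw [Algebra.norm_eq_zero_iff, AdjoinRoot.mk_eq_zero]

/-- Both sides are the product of the values of `q` at the roots of `p`, up to the sign
`(-1) ^ (deg q * deg p)`: the norm of `p` is `det p(M)` for a matrix `M` with characteristic
polynomial `q`, and `p` splits over the algebraic closure. -/
lemma polyNorm_eq_resultant {q p : F[X]} (hq : q.Monic) (hp : p.Monic) :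
    polyNorm q p = resultant q p := by
  classical
  let E := AlgebraicClosure F
  let ι := algebraMap F E
  let pb := AdjoinRoot.powerBasis hq.ne_zero
  let M := Algebra.leftMulMatrix pb.basis (AdjoinRoot.root q)
  have hM : M.charpoly = q := by
    have := charpoly_leftMulMatrix pb
    rw [AdjoinRoot.powerBasis_gen] at this
    rw [this, AdjoinRoot.minpoly_root hq.ne_zero]
    simp [hq.leadingCoeff]
  have hdim : pb.dim = q.natDegree := AdjoinRoot.powerBasis_dim _
  have h1 : polyNorm q p = (aeval M p).det := by
    unfold polyNorm
    rw [Algebra.norm_eq_matrix_det pb.basis, ← AdjoinRoot.aeval_eq,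
      ← Polynomial.aeval_algHom_apply]
  have hsp : (p.map ι).Splits := IsAlgClosed.splits _
  have h2 : ι (polyNorm q p) = (aeval (M.map ι) (p.map ι)).det := by
    rw [h1, RingHom.map_det, aeval_map_algebraMap]
    congr 1
    exact (Polynomial.aeval_algHom_apply (Algebra.ofId F E).mapMatrix M p).symm
  have h3 : ∀ s : Multiset E, (aeval (M.map ι) ((s.map fun a => X - C a).prod)).det
      = (-1) ^ (q.natDegree * s.card) * (s.map (q.map ι).eval).prod := by
    intro s
    induction s using Multiset.induction_on with
    | empty => simp
    | cons a s ih =>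
      -- `det (M - a) = (-1) ^ deg q * q(a)`, since `q` is the characteristic polynomial of `M`.
      have : (aeval (M.map ι) (X - C a)).det = (-1) ^ q.natDegree * (q.map ι).eval a := by
        have hev : (q.map ι).eval a = (Matrix.scalar _ a - M.map ι).det := by
          rw [← Matrix.eval_charpoly, Matrix.charpoly_map, hM]
        have : aeval (M.map ι) (X - C a) = -(Matrix.scalar _ a - M.map ι) := by
          simp [Matrix.algebraMap_eq_diagonal, Matrix.scalar_apply]
        rw [this, Matrix.det_neg, hev]
        simp [hdim]
      rw [Multiset.map_cons, Multiset.prod_cons, map_mul, Matrix.det_mul, ih, this]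
      simp only [Multiset.map_cons, Multiset.prod_cons, Multiset.card_cons]
      ring
  have h4 := resultant_eq_prod_eval (p.map ι) (q.map ι) q.natDegree (by simp) hsp
  apply ι.injective
  rw [h2]
  have h5 : p.map ι = ((p.map ι).roots.map fun a => X - C a).prod :=
    hsp.eq_prod_roots_of_monic (hp.map ι)
  have h6 : (p.map ι).roots.card = p.natDegree := by
    rw [← hsp.natDegree_eq_card_roots]; simp
  conv_lhs => rw [h5]
  rw [h3, h6, resultant_comm, map_mul, ← resultant_map_map]
  rw [natDegree_map] at h4
  rw [h4]
  simp [(hp.map ι).leadingCoeff]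

/-- The reciprocity law `N_{F[X]/q}(p) = ± N_{F[X]/p}(q)`, which is what lets the degree of the modulus
be lowered. -/
lemma polyNorm_reciprocity {q p : F[X]} (hq : q.Monic) (hp : p.Monic) :
    polyNorm q p = (-1) ^ (q.natDegree * p.natDegree) * polyNorm p q := by
  rw [polyNorm_eq_resultant hq hp, polyNorm_eq_resultant hp hq, resultant_comm]

end Norm
end CubicComposition

/-! ### Trilinear and bilinear maps in coordinates -/

namespace CubicComposition

section Multilinear
variable {F : Type*} [Field F] {n : ℕ}
variable {S : Type*} [CommRing S] [Algebra F S]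

/-- The trilinear form with coefficients `c`, evaluated in a commutative `F`-algebra `S`. -/
def tri (c : Fin n → Fin n → Fin n → F) (u v w : Fin n → S) : S :=
  ∑ i, ∑ j, ∑ k, algebraMap F S (c i j k) * (u i * v j * w k)

/-- The bilinear product with structure constants `b`, evaluated in a commutative `F`-algebra `S`. -/
def bil (b : Fin n → Fin n → Fin n → F) (u v : Fin n → S) : Fin n → S :=
  fun k => ∑ i, ∑ j, algebraMap F S (b i j k) * (u i * v j)

/-- The cubic form `v ↦ c(v, v, v)`, evaluated in a commutative `F`-algebra `S`. Taking for `S` the field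
`F`, an extension of it, `F[X]` or a residue ring of `F[X]` gives all scalar extensions at once. -/
def cub (c : Fin n → Fin n → Fin n → F) (v : Fin n → S) : S := tri c v v v

variable (c b : Fin n → Fin n → Fin n → F)

lemma tri_add_left (u u' v w : Fin n → S) : tri c (u + u') v w = tri c u v w + tri c u' v w := by
  simp only [tri, ← Finset.sum_add_distrib, Pi.add_apply]
  refine Finset.sum_congr rfl fun i _ => Finset.sum_congr rfl fun j _ =>
    Finset.sum_congr rfl fun k _ => by ring

lemma tri_add_mid (u v v' w : Fin n → S) : tri c u (v + v') w = tri c u v w + tri c u v' w := by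
  simp only [tri, ← Finset.sum_add_distrib, Pi.add_apply]
  refine Finset.sum_congr rfl fun i _ => Finset.sum_congr rfl fun j _ =>
    Finset.sum_congr rfl fun k _ => by ring

lemma tri_add_right (u v w w' : Fin n → S) : tri c u v (w + w') = tri c u v w + tri c u v w' := by
  simp only [tri, ← Finset.sum_add_distrib, Pi.add_apply]
  refine Finset.sum_congr rfl fun i _ => Finset.sum_congr rfl fun j _ =>
    Finset.sum_congr rfl fun k _ => by ring

lemma tri_smul_left (s : S) (u v w : Fin n → S) : tri c (s • u) v w = s * tri c u v w := by
  simp only [tri, Finset.mul_sum, Pi.smul_apply, smul_eq_mul]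
  refine Finset.sum_congr rfl fun i _ => Finset.sum_congr rfl fun j _ =>
    Finset.sum_congr rfl fun k _ => by ring

lemma tri_smul_mid (s : S) (u v w : Fin n → S) : tri c u (s • v) w = s * tri c u v w := by
  simp only [tri, Finset.mul_sum, Pi.smul_apply, smul_eq_mul]
  refine Finset.sum_congr rfl fun i _ => Finset.sum_congr rfl fun j _ =>
    Finset.sum_congr rfl fun k _ => by ring

lemma tri_smul_right (s : S) (u v w : Fin n → S) : tri c u v (s • w) = s * tri c u v w := by
  simp only [tri, Finset.mul_sum, Pi.smul_apply, smul_eq_mul]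
  refine Finset.sum_congr rfl fun i _ => Finset.sum_congr rfl fun j _ =>
    Finset.sum_congr rfl fun k _ => by ring

lemma bil_add_left (u u' v : Fin n → S) : bil b (u + u') v = bil b u v + bil b u' v := by
  ext k
  simp only [bil, ← Finset.sum_add_distrib, Pi.add_apply]
  refine Finset.sum_congr rfl fun i _ => Finset.sum_congr rfl fun j _ => by ring

lemma bil_add_right (u v v' : Fin n → S) : bil b u (v + v') = bil b u v + bil b u v' := by
  ext k
  simp only [bil, ← Finset.sum_add_distrib, Pi.add_apply]
  refine Finset.sum_congr rfl fun i _ => Finset.sum_congr rfl fun j _ => by ring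

lemma bil_smul_left (s : S) (u v : Fin n → S) : bil b (s • u) v = s • bil b u v := by
  ext k
  simp only [bil, Finset.mul_sum, Pi.smul_apply, smul_eq_mul]
  refine Finset.sum_congr rfl fun i _ => Finset.sum_congr rfl fun j _ => by ring

lemma bil_smul_right (s : S) (u v : Fin n → S) : bil b u (s • v) = s • bil b u v := by
  ext k
  simp only [bil, Finset.mul_sum, Pi.smul_apply, smul_eq_mul]
  refine Finset.sum_congr rfl fun i _ => Finset.sum_congr rfl fun j _ => by ring

lemma cub_smul (s : S) (v : Fin n → S) : cub c (s • v) = s ^ 3 * cub c v := by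
  simp only [cub, tri_smul_left, tri_smul_mid, tri_smul_right]; ring

variable {S' : Type*} [CommRing S'] [Algebra F S']

lemma map_tri (f : S →ₐ[F] S') (u v w : Fin n → S) :
    f (tri c u v w) = tri c (f ∘ u) (f ∘ v) (f ∘ w) := by
  simp [tri, map_sum]

lemma map_cub (f : S →ₐ[F] S') (v : Fin n → S) : f (cub c v) = cub c (f ∘ v) :=
  map_tri c f v v v

lemma map_bil (f : S →ₐ[F] S') (u v : Fin n → S) : f ∘ bil b u v = bil b (f ∘ u) (f ∘ v) := by
  ext k
  simp [bil, map_sum]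

/-- The coefficients are invariant under the two adjacent transpositions of the indices, hence under all
permutations. -/
def IsSymm : Prop := ∀ i j k, c i j k = c j i k ∧ c i j k = c i k j

variable {c} in
lemma IsSymm.swap_left (hc : IsSymm c) (u v w : Fin n → S) : tri c u v w = tri c v u w := by
  simp only [tri]
  rw [Finset.sum_comm]
  refine Finset.sum_congr rfl fun i _ => Finset.sum_congr rfl fun j _ =>
    Finset.sum_congr rfl fun k _ => ?_
  rw [(hc i j k).1]; ring

variable {c} in
lemma IsSymm.swap_right (hc : IsSymm c) (u v w : Fin n → S) : tri c u v w = tri c u w v := by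
  simp only [tri]
  refine Finset.sum_congr rfl fun i _ => ?_
  rw [Finset.sum_comm]
  refine Finset.sum_congr rfl fun j _ => Finset.sum_congr rfl fun k _ => ?_
  rw [(hc i j k).2]; ring

variable {c} in
lemma IsSymm.cub_add (hc : IsSymm c) (u v : Fin n → S) :
    cub c (u + v) = cub c u + 3 * tri c u u v + 3 * tri c u v v + cub c v := by
  simp only [cub, tri_add_left, tri_add_mid, tri_add_right]
  rw [hc.swap_left v u u, hc.swap_right u v u, hc.swap_left v u v, hc.swap_right v v u,
    hc.swap_left v u v]
  ring

variable {c} in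
/-- The polarization identity for a symmetric trilinear form. -/
lemma IsSymm.six_tri (hc : IsSymm c) (u v w : Fin n → S) :
    6 * tri c u v w = cub c (u + v + w) - cub c (u + v) - cub c (u + w) - cub c (v + w)
      + cub c u + cub c v + cub c w := by
  simp only [cub, tri_add_left, tri_add_mid, tri_add_right]
  rw [hc.swap_left v u w, hc.swap_right u w v, hc.swap_right v w u, hc.swap_left v u w,
    hc.swap_left w u v, hc.swap_right u w v, hc.swap_left w v u, hc.swap_right v w u,
    hc.swap_left v u w]
  ring

/-- Nondegeneracy is inherited by every scalar extension. Over `F` it says that the linear map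
`N : F^n → F^(n × n)`, `v ↦ c(v, ·, ·)`, is injective; a left inverse `G` of `N` remains one after
extending scalars. -/
lemma eq_zero_of_tri_eq_zero
    (hnd : ∀ v : Fin n → F, (∀ y z : Fin n → F, tri c v y z = 0) → v = 0)
    (v : Fin n → S) (hv : ∀ y z : Fin n → S, tri c v y z = 0) : v = 0 := by
  classical
  let N : (Fin n → F) →ₗ[F] (Fin n → Fin n → F) :=
    { toFun := fun v j k => ∑ i, c i j k * v i
      map_add' := fun u v => by
        ext j k; simp [mul_add, Finset.sum_add_distrib]
      map_smul' := fun s v => by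
        ext j k; simp only [Finset.mul_sum, Pi.smul_apply, smul_eq_mul, RingHom.id_apply]
        exact Finset.sum_congr rfl fun i _ => by ring }
  have hN : LinearMap.ker N = ⊥ := by
    refine LinearMap.ker_eq_bot'.2 fun v hv => hnd v fun y z => ?_
    have h : ∀ j k, ∑ i, c i j k * v i = 0 := fun j k => congrFun (congrFun hv j) k
    simp only [tri]
    rw [Finset.sum_comm]
    refine Finset.sum_eq_zero fun j _ => ?_
    rw [Finset.sum_comm]
    refine Finset.sum_eq_zero fun k _ => ?_
    have := congrArg (· * (y j * z k)) (h j k)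
    simp only [zero_mul, Finset.sum_mul] at this
    rw [← this]
    exact Finset.sum_congr rfl fun i _ => by simp; ring
  obtain ⟨G, hG⟩ := N.exists_leftInverse_of_injective hN
  have h1 : ∀ j k, ∑ i, algebraMap F S (c i j k) * v i = 0 := by
    intro j k
    have := hv (Pi.single j 1) (Pi.single k 1)
    simpa [tri, Pi.single_apply] using this
  have h2 : ∀ (M : Fin n → Fin n → F) l,
      G M l = ∑ j, ∑ k, M j k * G (Pi.single j (Pi.single k 1)) l := by
    intro M l
    have : M = ∑ j, ∑ k, M j k • (Pi.single j (Pi.single k 1) : Fin n → Fin n → F) := by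
      ext a b
      simp [Finset.sum_apply, Pi.single_apply, ite_apply]
    conv_lhs => rw [this]
    simp [map_sum, Finset.sum_apply]
  have h3 : ∀ i l, ∑ j, ∑ k, c i j k * G (Pi.single j (Pi.single k 1)) l
      = if l = i then 1 else 0 := by
    intro i l
    have h := congrFun (LinearMap.congr_fun hG (Pi.single i 1)) l
    rw [LinearMap.comp_apply, h2] at h
    simpa [N, Pi.single_apply] using h
  ext l
  have : v l = ∑ j, ∑ k, algebraMap F S (G (Pi.single j (Pi.single k 1)) l)
      * ∑ i, algebraMap F S (c i j k) * v i := by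
    have e : v l = ∑ i, algebraMap F S (if l = i then 1 else 0) * v i := by simp
    rw [e]
    simp only [← h3, map_sum, map_mul, Finset.sum_mul, Finset.mul_sum]
    rw [Finset.sum_comm]
    refine Finset.sum_congr rfl fun j _ => ?_
    rw [Finset.sum_comm]
    exact Finset.sum_congr rfl fun k _ => Finset.sum_congr rfl fun i _ => by ring
  rw [this]
  simp [h1]

end Multilinear
end CubicComposition

/-! ### The composition law and the set of values -/

namespace CubicComposition
section Comp

/-- A nondegenerate cubic form with composition, in coordinates: a symmetric trilinear form `c` with
`6 ≠ 0` in `F`, and structure constants `b` of a product for which `v ↦ c(v, v, v)` is multiplicative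
on `F^n`. -/
structure CompositionData (F : Type*) [Field F] (n : ℕ) where
  c : Fin n → Fin n → Fin n → F
  b : Fin n → Fin n → Fin n → F
  symm : IsSymm c
  six_ne_zero : (6 : F) ≠ 0
  nondeg : ∀ v : Fin n → F, (∀ y z : Fin n → F, tri c v y z = 0) → v = 0
  comp : ∀ v w : Fin n → F, cub c (bil b v w) = cub c v * cub c w

variable {F : Type*} [Field F] {n : ℕ}

/-- A polynomial of degree at most `3` over an extension of `F` that vanishes on `F^n` is zero, because
`0, 1, 2, 3` are distinct in `F`. This is what extends the composition law to all scalar extensions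
even when `F` is finite. -/
lemma eq_zero_of_vanishing (h6 : (6 : F) ≠ 0) {R : Type*} [CommRing R] [IsDomain R] [Algebra F R]
    (P : MvPolynomial (Fin n) R) (hP : P.totalDegree ≤ 3)
    (h : ∀ x : Fin n → F, MvPolynomial.eval (fun i => algebraMap F R (x i)) P = 0) : P = 0 := by
  classical
  have h2 : (2 : F) ≠ 0 := fun h => h6 (by linear_combination 3 * h)
  have h3 : (3 : F) ≠ 0 := fun h => h6 (by linear_combination 2 * h)
  let s : Finset F := {0, 1, 2, 3}
  have hs : s.card = 4 := by
    have h12 : (1 : F) ≠ 2 := fun h => one_ne_zero (α := F) (by linear_combination -h)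
    have h13 : (1 : F) ≠ 3 := fun h => h2 (by linear_combination -h)
    have h23 : (2 : F) ≠ 3 := fun h => one_ne_zero (α := F) (by linear_combination -h)
    simp only [s]
    rw [Finset.card_insert_of_notMem, Finset.card_insert_of_notMem,
      Finset.card_insert_of_notMem, Finset.card_singleton] <;>
      simp [h12, h13, h23, h2.symm, h3.symm]
  refine MvPolynomial.eq_zero_of_eval_zero_at_prod_finset P
    (fun _ => s.image (algebraMap F R)) (fun i => ?_) fun x hx => ?_
  · rw [Finset.card_image_of_injective _ (algebraMap F R).injective, hs]
    exact lt_of_le_of_lt ((MvPolynomial.degreeOf_le_totalDegree P i).trans hP) (by norm_num)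
  · have : ∀ i, ∃ y : F, algebraMap F R y = x i := fun i => by
      obtain ⟨y, _, hy⟩ := Finset.mem_image.1 (hx i)
      exact ⟨y, hy⟩
    choose y hy using this
    rw [← h y]
    congr 2
    ext i; exact (hy i).symm

lemma isHomogeneous_cub {R : Type*} [CommRing R] [Algebra F R] (c : Fin n → Fin n → Fin n → F)
    (v : Fin n → MvPolynomial (Fin n) R) (hv : ∀ i, (v i).IsHomogeneous 1) :
    (cub c v).IsHomogeneous 3 := by
  unfold cub tri
  refine MvPolynomial.IsHomogeneous.sum _ _ _ fun i _ =>
    MvPolynomial.IsHomogeneous.sum _ _ _ fun j _ =>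
    MvPolynomial.IsHomogeneous.sum _ _ _ fun k _ => ?_
  rw [IsScalarTower.algebraMap_apply F R (MvPolynomial (Fin n) R), MvPolynomial.algebraMap_eq]
  exact (MvPolynomial.isHomogeneous_C _ _).mul (((hv i).mul (hv j)).mul (hv k))

lemma isHomogeneous_linear {R : Type*} [CommRing R] [Algebra F R] (a : F)
    (x : R) (j : Fin n) :
    (algebraMap F (MvPolynomial (Fin n) R) a * (MvPolynomial.C x * MvPolynomial.X j)).IsHomogeneous
      1 := by
  rw [IsScalarTower.algebraMap_apply F R (MvPolynomial (Fin n) R), MvPolynomial.algebraMap_eq]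
  exact (MvPolynomial.isHomogeneous_C _ _).mul
    ((MvPolynomial.isHomogeneous_C _ _).mul (MvPolynomial.isHomogeneous_X _ _))

namespace CompositionData
variable (A : CompositionData F n)

open MvPolynomial in
/-- The composition law with the left factor generic and the right factor in `F^n`. -/
lemma comp_aux {S : Type*} [CommRing S] [Algebra F S] (v : Fin n → S) (y : Fin n → F) :
    cub A.c (bil A.b v (algebraMap F S ∘ y)) = cub A.c v * algebraMap F S (cub A.c y) := by
  let P : MvPolynomial (Fin n) F :=
    cub A.c (bil A.b X (C ∘ y)) - C (cub A.c y) * cub A.c X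
  have hP : P = 0 := by
    refine eq_zero_of_vanishing A.six_ne_zero P ?_ fun x => ?_
    · refine IsHomogeneous.totalDegree_le ((isHomogeneous_cub _ _ fun k => ?_).sub ?_)
      · refine IsHomogeneous.sum _ _ _ fun i _ => IsHomogeneous.sum _ _ _ fun j _ => ?_
        rw [mul_comm (X i)]
        exact isHomogeneous_linear _ _ _
      · have := (isHomogeneous_C (Fin n) (cub A.c y)).mul
          (isHomogeneous_cub A.c X fun i => isHomogeneous_X F i)
        simpa using this
    · have e : ∀ p : MvPolynomial (Fin n) F, eval x p = aeval x p := fun p => by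
        rw [aeval_def, Algebra.algebraMap_self, eval₂_id]
      have e1 : aeval x ∘ (X : Fin n → MvPolynomial (Fin n) F) = x := by ext; simp
      have e2 : aeval x ∘ ((C : F →+* MvPolynomial (Fin n) F) ∘ y) = y := by ext; simp
      simp only [Algebra.algebraMap_self, RingHom.id_apply]
      rw [e]
      simp only [P, map_sub, map_mul, map_cub, map_bil, e1, e2, A.comp]
      simp; ring
  have h := congrArg (aeval v) hP
  have e1 : aeval v ∘ (X : Fin n → MvPolynomial (Fin n) F) = v := by ext; simp
  have e2 : aeval v ∘ ((C : F →+* MvPolynomial (Fin n) F) ∘ y) = algebraMap F S ∘ y := by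
    ext; simp
  simp only [P, map_sub, map_mul, map_cub, map_bil, e1, e2, map_zero, aeval_C] at h
  linear_combination h

open MvPolynomial in
/-- The composition law with the right factor generic and the left factor over a domain `R`. Applied
to `R = F[X_1, …, X_n]` and `v = X` it makes both factors generic. -/
lemma comp_aux' {R : Type*} [CommRing R] [IsDomain R] [Algebra F R] (v : Fin n → R) :
    cub A.c (bil A.b (fun i => C (v i)) X) =
      C (cub A.c v) * cub A.c (X : Fin n → MvPolynomial (Fin n) R) := by
  rw [← sub_eq_zero]
  refine eq_zero_of_vanishing A.six_ne_zero _ ?_ fun y => ?_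
  · refine IsHomogeneous.totalDegree_le ((isHomogeneous_cub _ _ fun k => ?_).sub ?_)
    · refine IsHomogeneous.sum _ _ _ fun i _ => IsHomogeneous.sum _ _ _ fun j _ => ?_
      exact isHomogeneous_linear _ _ _
    · have := (isHomogeneous_C (Fin n) (cub A.c v)).mul
        (isHomogeneous_cub A.c X fun i => isHomogeneous_X R i)
      simpa using this
  · let f : MvPolynomial (Fin n) R →ₐ[F] R :=
      aevalTower (AlgHom.id F R) (fun i => algebraMap F R (y i))
    have e (p : MvPolynomial (Fin n) R) : eval (fun i => algebraMap F R (y i)) p = f p := rfl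
    have e1 : f ∘ (X : Fin n → MvPolynomial (Fin n) R) = algebraMap F R ∘ y := by
      ext i; simp [f]
    have e2 : (f ∘ fun i => C (v i)) = v := by ext i; simp [f]
    have e3 : cub A.c (algebraMap F R ∘ y) = algebraMap F R (cub A.c y) :=
      (map_cub A.c (Algebra.ofId F R) y).symm
    have e4 : f (C (cub A.c v)) = cub A.c v := by simp [f]
    rw [e, map_sub, map_mul, map_cub, map_cub, map_bil, e1, e2, e3, e4, comp_aux, sub_self]

open MvPolynomial in
/-- The composition law holds over every commutative `F`-algebra. -/
lemma comp' {S : Type*} [CommRing S] [Algebra F S] (v w : Fin n → S) :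
    cub A.c (bil A.b v w) = cub A.c v * cub A.c w := by
  have hP := A.comp_aux' (X : Fin n → MvPolynomial (Fin n) F)
  let f : MvPolynomial (Fin n) (MvPolynomial (Fin n) F) →ₐ[F] S := aevalTower (aeval v) w
  have h := congrArg f hP
  have e1 : f ∘ (X : Fin n → MvPolynomial (Fin n) (MvPolynomial (Fin n) F)) = w := by
    ext i; simp [f]
  have e2 : (f ∘ fun i => C (X i)) = v := by ext i; simp [f]
  have e3 : aeval v ∘ (X : Fin n → MvPolynomial (Fin n) F) = v := by ext; simp
  have e4 : f (C (cub A.c (X : Fin n → MvPolynomial (Fin n) F))) = cub A.c v := by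
    simp only [f, aevalTower_C]
    rw [map_cub, e3]
  rwa [map_mul, map_cub A.c f, map_cub A.c f, map_bil A.b f, e1, e2, e4] at h

lemma six_isUnit (A : CompositionData F n) (S : Type*) [CommRing S] [Algebra F S] : IsUnit (6 : S) := by
  have := (isUnit_iff_ne_zero.2 A.six_ne_zero).map (algebraMap F S)
  rwa [map_ofNat] at this

lemma tri_bil_left {S : Type*} [CommRing S] [Algebra F S] (a u v w : Fin n → S) :
    tri A.c (bil A.b a u) (bil A.b a v) (bil A.b a w) = cub A.c a * tri A.c u v w := by
  refine (A.six_isUnit S).mul_left_cancel ?_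
  rw [A.symm.six_tri, mul_left_comm, A.symm.six_tri]
  simp only [← bil_add_right, A.comp']
  ring

lemma tri_bil_right {S : Type*} [CommRing S] [Algebra F S] (a u v w : Fin n → S) :
    tri A.c (bil A.b u a) (bil A.b v a) (bil A.b w a) = cub A.c a * tri A.c u v w := by
  refine (A.six_isUnit S).mul_left_cancel ?_
  rw [A.symm.six_tri, mul_left_comm, A.symm.six_tri]
  simp only [← bil_add_left, A.comp']
  ring

lemma tri_zero_left {S : Type*} [CommRing S] [Algebra F S] (v w : Fin n → S) :
    tri A.c 0 v w = 0 := by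
  simp [tri]

/-- Left multiplication by a vector of nonzero value is a similarity of a nondegenerate form, hence
injective. -/
lemma eq_zero_of_bil_left {S : Type*} [CommRing S] [IsDomain S] [Algebra F S] {a u : Fin n → S}
    (ha : cub A.c a ≠ 0) (h : bil A.b a u = 0) : u = 0 := by
  refine eq_zero_of_tri_eq_zero A.c A.nondeg u fun y z => ?_
  have := A.tri_bil_left a u y z
  rw [h, tri_zero_left] at this
  exact (mul_eq_zero.1 this.symm).resolve_left ha

lemma eq_zero_of_bil_right {S : Type*} [CommRing S] [IsDomain S] [Algebra F S] {a u : Fin n → S}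
    (ha : cub A.c a ≠ 0) (h : bil A.b u a = 0) : u = 0 := by
  refine eq_zero_of_tri_eq_zero A.c A.nondeg u fun y z => ?_
  have := A.tri_bil_right a u y z
  rw [h, tri_zero_left] at this
  exact (mul_eq_zero.1 this.symm).resolve_left ha

/-- The set of values of the cubic form on `F^n`, with `0` included. -/
def values : Set F := {x | ∃ v : Fin n → F, cub A.c v = x}

variable {A}

lemma mul_mem {x y : F} (hx : x ∈ A.values) (hy : y ∈ A.values) : x * y ∈ A.values := by
  obtain ⟨v, rfl⟩ := hx
  obtain ⟨w, rfl⟩ := hy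
  exact ⟨bil A.b v w, A.comp v w⟩

/-- `φ(v)⁻¹ = φ(φ(v)⁻¹ • v * v)`, by multiplicativity and the degree `3`. -/
lemma inv_mem {x : F} (hx : x ∈ A.values) : x⁻¹ ∈ A.values := by
  by_cases h : x = 0
  · simpa [h] using hx
  obtain ⟨v, rfl⟩ := hx
  refine ⟨(cub A.c v)⁻¹ • bil A.b v v, ?_⟩
  rw [cub_smul, A.comp]
  field_simp

lemma one_mem (h : ∃ v : Fin n → F, cub A.c v ≠ 0) : (1 : F) ∈ A.values := by
  obtain ⟨v, hv⟩ := h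
  have := mul_mem (A := A) ⟨v, rfl⟩ (inv_mem ⟨v, rfl⟩)
  rwa [mul_inv_cancel₀ hv] at this

lemma zero_mem : (0 : F) ∈ A.values := ⟨0, by simp [cub, tri]⟩

lemma cube_mem (h : (1 : F) ∈ A.values) (x : F) : x ^ 3 ∈ A.values := by
  obtain ⟨v, hv⟩ := h
  exact ⟨x • v, by rw [cub_smul, hv, mul_one]⟩

lemma pow_mem (h : (1 : F) ∈ A.values) {x : F} (hx : x ∈ A.values) (k : ℕ) :
    x ^ k ∈ A.values := by
  induction k with
  | zero => simpa using h
  | succ k ih => rw [pow_succ]; exact mul_mem ih hx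

lemma neg_one_pow_mem (h : (1 : F) ∈ A.values) (k : ℕ) : (-1 : F) ^ k ∈ A.values := by
  refine pow_mem h ?_ k
  have := cube_mem h (-1)
  rwa [show (-1 : F) ^ 3 = -1 by ring] at this

lemma mem_of_mul_mem {x y : F} (hy : y ∈ A.values) (hy0 : y ≠ 0) (h : x * y ∈ A.values) :
    x ∈ A.values := by
  have := mul_mem h (inv_mem hy)
  rwa [mul_inv_cancel_right₀ hy0] at this

variable (A)

open Polynomial in
/-- An isotropic form represents every element of `F`. The composition law produces a nonzero `r` with
`c(r, r, u) = 0` for all `u`; along a line in the direction `r` the form is then affine, with nonzero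
slope at a suitable base point `y`. -/
lemma universal_of_isotropic (h : ∃ v : Fin n → F, v ≠ 0 ∧ cub A.c v = 0) (x : F) :
    x ∈ A.values := by
  have h6 := A.six_ne_zero
  have h2 : (2 : F) ≠ 0 := fun h => h6 (by linear_combination 3 * h)
  have h3 : (3 : F) ≠ 0 := fun h => h6 (by linear_combination 2 * h)
  obtain ⟨v, hv0, hv⟩ := h
  have key : ∃ v : Fin n → F, v ≠ 0 ∧ ∀ u, tri A.c v v u = 0 := by
    -- If multiplication by the isotropic `v` were bijective, the form would vanish identically.
    obtain ⟨w, hw0, hw⟩ : ∃ w : Fin n → F, w ≠ 0 ∧ bil A.b v w = 0 := by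
      by_contra! hcon
      let L : (Fin n → F) →ₗ[F] (Fin n → F) :=
        { toFun := bil A.b v
          map_add' := bil_add_right _ _
          map_smul' := fun s u => bil_smul_right _ _ _ _ }
      have hinj : Function.Injective L :=
        (injective_iff_map_eq_zero L).2 fun w hw => by_contra fun h => hcon w h hw
      have hsurj : Function.Surjective L := LinearMap.injective_iff_surjective.1 hinj
      refine hv0 (A.nondeg v fun y z => ?_)
      have hz : ∀ u : Fin n → F, cub A.c u = 0 := fun u => by
        obtain ⟨w, rfl⟩ := hsurj u
        exact (A.comp v w).trans (by rw [hv, zero_mul])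
      have := A.symm.six_tri v y z
      simp only [hz] at this
      simpa [h6] using this
    -- As `v * w = 0`, the product `(v + X u) * (w + X y)` is divisible by `X`, so its value is divisible
    -- by `X ^ 3`; the coefficient of `X ^ 2` of the product of the values is `9 c(v,v,u) c(w,w,y)`.
    have hprod : ∀ u y : Fin n → F, tri A.c v v u * tri A.c w w y = 0 := by
      intro u y
      let ι : F →ₐ[F] F[X] := Algebra.ofId F F[X]
      have e := A.comp' (ι ∘ v + (X : F[X]) • (ι ∘ u)) (ι ∘ w + (X : F[X]) • (ι ∘ y))
      have hι : ∀ a, ι a = C a := fun a => rfl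
      have e1 : bil A.b (ι ∘ v + (X : F[X]) • (ι ∘ u)) (ι ∘ w + (X : F[X]) • (ι ∘ y))
          = (X : F[X]) • (bil A.b (ι ∘ u) (ι ∘ w) + bil A.b (ι ∘ v) (ι ∘ y)
              + (X : F[X]) • bil A.b (ι ∘ u) (ι ∘ y)) := by
        simp only [bil_add_left, bil_add_right, bil_smul_left, bil_smul_right, ← map_bil, hw]
        ext i : 1
        simp
        ring
      rw [e1, cub_smul, A.symm.cub_add (ι ∘ v), A.symm.cub_add (ι ∘ w)] at e
      simp only [cub_smul, tri_smul_mid, tri_smul_right, ← map_tri, ← map_cub, hv] at e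
      have hw' : cub A.c w = 0 := by
        by_contra hne
        exact hv0 (A.eq_zero_of_bil_right hne hw)
      rw [hw', hι, hι, hι, hι, hι, hι, hι] at e
      generalize cub A.c (bil A.b (ι ∘ u) (ι ∘ w) + bil A.b (ι ∘ v) (ι ∘ y)
              + (X : F[X]) • bil A.b (ι ∘ u) (ι ∘ y)) = Q at e
      have e2 : C (9 * (tri A.c v v u * tri A.c w w y)) = X * (Q -
          (9 * (C (tri A.c v v u) * (C (tri A.c w y y)) + C (tri A.c v u u) * C (tri A.c w w y))
          + X * (3 * C (tri A.c v v u) * C (cub A.c y) + 9 * C (tri A.c v u u) * C (tri A.c w y y)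
            + 3 * C (cub A.c u) * C (tri A.c w w y))
          + X ^ 2 * (3 * C (tri A.c v u u) * C (cub A.c y) + 3 * C (cub A.c u) * C (tri A.c w y y))
          + X ^ 3 * C (cub A.c u) * C (cub A.c y))) := by
        have hX : (X : F[X]) ^ 2 ≠ 0 := pow_ne_zero _ X_ne_zero
        refine mul_left_cancel₀ hX ?_
        simp only [map_mul, C_ofNat, map_zero] at e ⊢
        linear_combination -e
      have e3 := congrArg (fun p => coeff p 0) e2
      simp only [coeff_C_zero, mul_coeff_zero, coeff_X_zero, zero_mul] at e3
      have h9 : (9 : F) ≠ 0 := by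
        rw [show (9 : F) = 3 * 3 by norm_num]; exact mul_ne_zero h3 h3
      exact (mul_eq_zero.1 e3).resolve_left h9
    by_cases hc : ∀ u, tri A.c v v u = 0
    · exact ⟨v, hv0, hc⟩
    · push Not at hc
      obtain ⟨u, hu⟩ := hc
      exact ⟨w, hw0, fun y => (mul_eq_zero.1 (hprod u y)).resolve_left hu⟩
  obtain ⟨r, hr0, hr⟩ := key
  obtain ⟨y, hy⟩ : ∃ y, tri A.c r y y ≠ 0 := by
    by_contra! hcon
    refine hr0 (A.nondeg r fun y z => ?_)
    have := hcon (y + z)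
    rw [tri_add_mid, tri_add_right, tri_add_right, hcon y, hcon z, A.symm.swap_right r z y] at this
    have : 2 * tri A.c r y z = 0 := by linear_combination this
    exact (mul_eq_zero.1 this).resolve_left h2
  refine ⟨y + ((x - cub A.c y) / (3 * tri A.c r y y)) • r, ?_⟩
  have hs : tri A.c y y r = tri A.c r y y := by
    rw [A.symm.swap_right, A.symm.swap_left]
  have hs2 : tri A.c y r r = 0 := by
    rw [A.symm.swap_left, A.symm.swap_right, hr]
  have hs3 : cub A.c r = 0 := hr r
  rw [A.symm.cub_add, cub_smul]
  simp only [tri_smul_mid, tri_smul_right, hs, hs2, hs3]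
  field_simp
  ring

end CompositionData
end Comp
end CubicComposition

/-! ### The norm principle for values -/

namespace CubicComposition
section Poly
open Polynomial
variable {F : Type*} [Field F] {n : ℕ}

/-- A Thue-type lemma: for an `F`-linear `T` there are vectors `u`, `w`, not both zero, with entries of
degree at most `deg q / 2` and `T u ≡ w` modulo `q`. The pairs `(u, w)` form a space of dimension
`2 n (⌊deg q / 2⌋ + 1) > n * deg q`, so the map `(u, w) ↦ T u - w` modulo `q` has a kernel. -/
lemma exists_small_representative (T : (Fin n → F[X]) →ₗ[F] (Fin n → F[X])) {q : F[X]}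
    (hq : q ≠ 0) (hn : 0 < n) :
    ∃ u w : Fin n → F[X], (u ≠ 0 ∨ w ≠ 0) ∧ (∀ i, (u i).natDegree ≤ q.natDegree / 2) ∧
      (∀ i, (w i).natDegree ≤ q.natDegree / 2) ∧ ∀ i, q ∣ T u i - w i := by
  set d := q.natDegree / 2 with hd
  let V := Fin n → degreeLT F (d + 1)
  let inc : V →ₗ[F] (Fin n → F[X]) := (degreeLT F (d + 1)).subtype.compLeft (Fin n)
  let red : (Fin n → F[X]) →ₗ[F] (Fin n → AdjoinRoot q) :=
    (AdjoinRoot.mkₐ (R := F) q).toLinearMap.compLeft (Fin n)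
  let L : V × V →ₗ[F] (Fin n → AdjoinRoot q) :=
    (red ∘ₗ T ∘ₗ inc) ∘ₗ LinearMap.fst F V V - (red ∘ₗ inc) ∘ₗ LinearMap.snd F V V
  have : Module.Finite F (AdjoinRoot q) := (AdjoinRoot.powerBasis hq).finite
  have : Module.Finite F (degreeLT F (d + 1)) :=
    Module.Finite.equiv (degreeLTEquiv F (d + 1)).symm
  have h1 : Module.finrank F (Fin n → AdjoinRoot q) = n * q.natDegree := by
    rw [Module.finrank_pi_fintype]
    simp [(AdjoinRoot.powerBasis hq).finrank]
  have h2 : Module.finrank F (V × V) = n * (d + 1) + n * (d + 1) := by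
    rw [Module.finrank_prod, Module.finrank_pi_fintype]
    simp [(degreeLTEquiv F (d + 1)).finrank_eq]
  have hker : LinearMap.ker L ≠ ⊥ := by
    apply LinearMap.ker_ne_bot_of_finrank_lt
    rw [h1, h2, ← mul_add]
    exact Nat.mul_lt_mul_of_pos_left (by omega) hn
  obtain ⟨⟨u, w⟩, hx, hx0⟩ := Submodule.exists_mem_ne_zero_of_ne_bot hker
  have hdeg : ∀ p : degreeLT F (d + 1), (p : F[X]).natDegree ≤ d := fun p =>
    Nat.le_of_lt_succ (by
      by_cases h : (p : F[X]) = 0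
      · simp [h]
      · exact (natDegree_lt_iff_degree_lt h).2 (mem_degreeLT.1 p.2))
  have hinc : ∀ z : V, inc z = 0 → z = 0 := fun z hz => by
    ext i : 2
    exact congrFun hz i
  refine ⟨inc u, inc w, ?_, fun i => hdeg _, fun i => hdeg _, fun i => ?_⟩
  · by_contra! h
    exact hx0 (Prod.ext (hinc u h.1) (hinc w h.2))
  · have := congrFun (LinearMap.mem_ker.1 hx) i
    exact AdjoinRoot.mk_eq_mk.1 (sub_eq_zero.1 this)

/-- Every nonzero polynomial vector is a scalar multiple of a primitive one. -/
lemma exists_primitive (w : Fin n → F[X]) (hw : w ≠ 0) :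
    ∃ (g : F[X]) (w' : Fin n → F[X]), w = g • w' ∧ w' ≠ 0 ∧
      (∀ i, (w' i).natDegree ≤ (w i).natDegree) ∧ (∃ i, w i ≠ 0 ∧ g ∣ w i) ∧
      ∀ p : F[X], Irreducible p → ∃ i, ¬ p ∣ w' i := by
  classical
  obtain ⟨i₀, hi₀⟩ := Function.ne_iff.1 hw
  obtain ⟨w', h1, h2⟩ := Finset.extract_gcd w ⟨i₀, Finset.mem_univ _⟩
  have hg : Finset.univ.gcd w ≠ 0 := fun h => hi₀ (Finset.gcd_eq_zero_iff.1 h i₀ (Finset.mem_univ _))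
  have h1' : ∀ i, w i = Finset.univ.gcd w * w' i := fun i => h1 i (Finset.mem_univ _)
  refine ⟨Finset.univ.gcd w, w', funext h1', ?_, ?_, ⟨i₀, hi₀, ?_⟩, ?_⟩
  · rintro rfl
    exact hi₀ (by simpa using h1' i₀)
  · intro i
    by_cases h : w' i = 0
    · simp [h]
    · rw [h1' i, natDegree_mul hg h]
      omega
  · exact Finset.gcd_dvd (Finset.mem_univ _)
  · intro p hp
    by_contra! h
    have := Finset.dvd_gcd (s := Finset.univ) (f := w') (a := p) fun i _ => h i
    rw [h2] at this
    exact hp.not_isUnit (isUnit_of_dvd_one this)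

lemma natDegree_coeff_cub (c : Fin n → Fin n → Fin n → F) (w : Fin n → F[X]) (e : ℕ)
    (hw : ∀ i, (w i).natDegree ≤ e) :
    (cub c w).natDegree ≤ 3 * e ∧ (cub c w).coeff (3 * e) = cub c fun i => (w i).coeff e := by
  have hm : ∀ i j k, (w i * w j * w k).natDegree ≤ 3 * e := fun i j k => by
    have h1 := natDegree_mul_le (p := w i * w j) (q := w k)
    have h2 := natDegree_mul_le (p := w i) (q := w j)
    have := hw i; have := hw j; have := hw k
    omega
  constructor
  · unfold cub tri
    refine natDegree_sum_le_of_forall_le _ _ fun i _ => natDegree_sum_le_of_forall_le _ _ fun j _ =>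
      natDegree_sum_le_of_forall_le _ _ fun k _ => ?_
    exact (natDegree_C_mul_le _ _).trans (hm i j k)
  · simp only [cub, tri, finsetSum_coeff]
    refine Finset.sum_congr rfl fun i _ => Finset.sum_congr rfl fun j _ =>
      Finset.sum_congr rfl fun k _ => ?_
    rw [Polynomial.algebraMap_eq, coeff_C_mul, show 3 * e = (e + e) + e by ring,
      coeff_mul_add_eq_of_natDegree_le (natDegree_mul_le_of_le (hw i) (hw j)) (hw k),
      coeff_mul_add_eq_of_natDegree_le (hw i) (hw j)]
    rfl

namespace CompositionData
variable (A : CompositionData F n)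

/-- If the form is anisotropic over `F`, then the leading coefficient of the value of a nonzero polynomial
vector is the value of its vector of top coefficients, and the degree of the value is divisible by 3. -/
lemma leading_cub (hA : ∀ v : Fin n → F, cub A.c v = 0 → v = 0) (w : Fin n → F[X]) (hw : w ≠ 0)
    (d : ℕ) (hd : ∀ i, (w i).natDegree ≤ d) :
    cub A.c w ≠ 0 ∧ (cub A.c w).leadingCoeff ∈ A.values ∧
      ∃ e ≤ d, (cub A.c w).natDegree = 3 * e := by
  obtain ⟨i₀, hi₀⟩ := Function.ne_iff.1 hw
  let e := Finset.univ.sup fun i => (w i).natDegree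
  have he : ∀ i, (w i).natDegree ≤ e := fun i =>
    Finset.le_sup (f := fun i => (w i).natDegree) (Finset.mem_univ i)
  obtain ⟨h1, h2⟩ := natDegree_coeff_cub A.c w e he
  have h3 : cub A.c (fun i => (w i).coeff e) ≠ 0 := by
    intro h
    have h0 := hA _ h
    obtain ⟨i, _, hi⟩ := Finset.exists_mem_eq_sup Finset.univ ⟨i₀, Finset.mem_univ _⟩
      fun i => (w i).natDegree
    have h4 : (w i).coeff (w i).natDegree = 0 := by
      have := congrFun h0 i
      simp only [e, hi] at this
      exact this
    have h5 : w i = 0 := leadingCoeff_eq_zero.1 h4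
    have h6 : e = 0 := by simp only [e, hi, h5, natDegree_zero]
    have h7 : (w i₀).natDegree = 0 := by have := he i₀; omega
    have h8 := congrFun h0 i₀
    simp only [h6, Pi.zero_apply] at h8
    exact hi₀ (leadingCoeff_eq_zero.1 (by rw [leadingCoeff, h7]; exact h8))
  have h4 : (cub A.c w).natDegree = 3 * e := natDegree_eq_of_le_of_coeff_ne_zero h1 (by rwa [h2])
  refine ⟨fun h => h3 (by rw [← h2, h, coeff_zero]), ?_, e, Finset.sup_le fun i _ => hd i, h4⟩
  rw [leadingCoeff, h4, h2]
  exact ⟨_, rfl⟩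

/-- The form becomes isotropic over the residue ring `F[X] / (q)`. -/
def IsoAt (q : F[X]) : Prop := ∃ w : Fin n → F[X], (∃ i, ¬ q ∣ w i) ∧ q ∣ cub A.c w

/-- Norms from `F[X] / (q)` of values of the form are values of the form over `F`. -/
def GoodAt (q : F[X]) : Prop := ∀ v : Fin n → F[X], polyNorm q (cub A.c v) ∈ A.values

variable {A}

/-- By multiplicativity the claim `polyNorm q f ∈ A.values` may be checked on the leading coefficient and
the monic irreducible factors of `f`. -/
lemma polyNorm_mem_of_factors (h1 : (1 : F) ∈ A.values) {q f : F[X]}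
    (hlc : polyNorm q (C f.leadingCoeff) ∈ A.values)
    (h : ∀ p : F[X], p.Monic → Irreducible p → p ∣ f → polyNorm q p ∈ A.values) :
    polyNorm q f ∈ A.values := by
  classical
  by_cases hf : f = 0
  · simpa [hf] using hlc
  rw [← leadingCoeff_mul_prod_normalizedFactors f, polyNorm_mul]
  refine mul_mem hlc ?_
  have hs : ∀ p ∈ UniqueFactorizationMonoid.normalizedFactors f, polyNorm q p ∈ A.values :=
    fun p hp => by
      have hirr := UniqueFactorizationMonoid.irreducible_of_normalized_factor p hp
      refine h p ?_ hirr (UniqueFactorizationMonoid.dvd_of_mem_normalizedFactors hp)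
      have := monic_normalize hirr.ne_zero
      rwa [UniqueFactorizationMonoid.normalize_normalized_factor p hp] at this
  generalize UniqueFactorizationMonoid.normalizedFactors f = s at hs
  induction s using Multiset.induction_on with
  | empty => simpa [polyNorm] using h1
  | cons a s ih =>
    rw [Multiset.prod_cons, polyNorm_mul]
    exact mul_mem (hs a (by simp)) (ih fun p hp => hs p (by simp [hp]))

/-- `x ^ deg p` is the norm of the constant `x` modulo `p`, so multiplying over the factors `p` of `g`
gives `x ^ deg g`. -/
lemma pow_natDegree_mem (h1 : (1 : F) ∈ A.values) (x : F) (g : F[X]) (hg : g ≠ 0)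
    (hfac : ∀ p : F[X], p.Monic → Irreducible p → p ∣ g → ∀ f, polyNorm p f ∈ A.values) :
    x ^ g.natDegree ∈ A.values := by
  classical
  induction g using WfDvdMonoid.induction_on_irreducible with
  | zero => exact absurd rfl hg
  | unit u hu => rw [natDegree_eq_zero_of_isUnit hu, pow_zero]; exact h1
  | mul a p ha hp iha =>
    rw [natDegree_mul hp.ne_zero ha, pow_add]
    refine mul_mem ?_ (iha ha fun p' h1 h2 h3 => hfac p' h1 h2 (h3.mul_left _))
    have hassoc := associated_normalize p
    have h2 := hfac (normalize p) (monic_normalize hp.ne_zero)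
      (hassoc.irreducible hp) (hassoc.symm.dvd.trans (dvd_mul_right _ _)) (C x)
    rwa [polyNorm_C (hassoc.irreducible hp).ne_zero, natDegree_eq_of_degree_eq
      degree_normalize] at h2

lemma polyNorm_mem_symm (h1 : (1 : F) ∈ A.values) {q p : F[X]} (hq : q.Monic) (hp : p.Monic)
    (h : polyNorm p q ∈ A.values) : polyNorm q p ∈ A.values := by
  rw [polyNorm_reciprocity hq hp]
  exact mul_mem (neg_one_pow_mem h1 _) h

lemma cub_congr (c : Fin n → Fin n → Fin n → F) {q : F[X]} {u v : Fin n → F[X]}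
    (h : ∀ i, q ∣ u i - v i) : q ∣ cub c u - cub c v := by
  rw [← AdjoinRoot.mk_eq_mk]
  have := map_cub c (AdjoinRoot.mkₐ (R := F) q) u
  have h2 := map_cub c (AdjoinRoot.mkₐ (R := F) q) v
  have h3 : (AdjoinRoot.mkₐ (R := F) q) ∘ u = (AdjoinRoot.mkₐ (R := F) q) ∘ v :=
    funext fun i => AdjoinRoot.mk_eq_mk.2 (h i)
  rw [h3, ← h2] at this
  exact this

variable (A)

/-- Left multiplication by `v` on polynomial vectors, as an `F`-linear map. -/
noncomputable def lmul (v : Fin n → F[X]) : (Fin n → F[X]) →ₗ[F] (Fin n → F[X]) where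
  toFun u := bil A.b v u
  map_add' := bil_add_right _ _
  map_smul' s u := by
    rw [← algebraMap_smul F[X] s u, bil_smul_right, algebraMap_smul]
    rfl

/-- A vector annihilated by some nonzero `v` over the residue field `F[X] / (q)` is isotropic there. -/
lemma dvd_cub_of_dvd_bil {q : F[X]} (hq : Irreducible q) {v u : Fin n → F[X]}
    (hv : ∃ i, ¬ q ∣ v i) (h : ∀ i, q ∣ bil A.b v u i) : q ∣ cub A.c u := by
  have := Fact.mk hq
  let f := AdjoinRoot.mkₐ (R := F) q
  by_contra hne
  obtain ⟨i, hi⟩ := hv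
  have h1 : cub A.c (f ∘ u) ≠ 0 := by
    rw [← map_cub]
    exact fun h => hne (AdjoinRoot.mk_eq_zero.1 h)
  have h2 : bil A.b (f ∘ v) (f ∘ u) = 0 := by
    rw [← map_bil]
    exact funext fun i => AdjoinRoot.mk_eq_zero.2 (h i)
  exact hi (AdjoinRoot.mk_eq_zero.1 (congrFun (A.eq_zero_of_bil_right h1 h2) i))

lemma exists_not_dvd_of_natDegree_lt {q : F[X]} {w : Fin n → F[X]} (hw : w ≠ 0)
    (h : ∀ i, (w i).natDegree < q.natDegree) : ∃ i, ¬ q ∣ w i := by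
  obtain ⟨i, hi⟩ := Function.ne_iff.1 hw
  exact ⟨i, fun hd => absurd (natDegree_le_of_dvd hd hi) (not_le.2 (h i))⟩

/-- An isotropic vector modulo `q` can be replaced by a primitive one with entries of degree at most
`deg q / 2`: multiply `v` by the small vector `u` of the Thue-type lemma. -/
lemma exists_small_isotropic {q : F[X]} (hq : Irreducible q) (hiso : A.IsoAt q) (hn : 0 < n) :
    ∃ w : Fin n → F[X], w ≠ 0 ∧ (∀ i, (w i).natDegree ≤ q.natDegree / 2) ∧ q ∣ cub A.c w ∧
      ∀ p : F[X], Irreducible p → ∃ i, ¬ p ∣ w i := by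
  have hqd : 0 < q.natDegree := hq.natDegree_pos
  obtain ⟨v, hv, hqv⟩ := hiso
  have main : ∃ w : Fin n → F[X], w ≠ 0 ∧ (∀ i, (w i).natDegree ≤ q.natDegree / 2) ∧
      q ∣ cub A.c w := by
    obtain ⟨u, w, huw, hu, hw, hdvd⟩ := exists_small_representative (A.lmul v) hq.ne_zero hn
    by_cases hw0 : w = 0
    · refine ⟨u, huw.resolve_right (by simp [hw0]), hu, A.dvd_cub_of_dvd_bil hq hv fun i => ?_⟩
      simpa [hw0, lmul] using hdvd i
    · refine ⟨w, hw0, hw, ?_⟩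
      have h1 := cub_congr A.c hdvd
      have h2 : cub A.c (A.lmul v u) = cub A.c v * cub A.c u := A.comp' v u
      rw [h2] at h1
      exact (dvd_sub_right (hqv.mul_right _)).1 h1
  obtain ⟨w, hw0, hw, hqw⟩ := main
  obtain ⟨g, w', rfl, hw'0, hdeg, ⟨i, hi, hgi⟩, hprim⟩ := exists_primitive w hw0
  refine ⟨w', hw'0, fun i => (hdeg i).trans (hw i), ?_, hprim⟩
  rw [cub_smul] at hqw
  refine (hq.prime.dvd_or_dvd hqw).resolve_left fun h => ?_
  have h1 := natDegree_le_of_dvd ((hq.prime.dvd_of_dvd_pow h).trans hgi) hi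
  have h2 := hw i
  omega

/-- If the form is isotropic modulo `q`, then all norms from `F[X] / (q)` are values over `F`. With `w` a
small isotropic vector, `cub w = q * g` where `deg g < deg q`; modulo the factors of `g` the form is
isotropic too, so induction applies to them. For an irreducible `p` of small degree not dividing `g`,
`N_p(q) N_p(g) = N_p(cub w)` is a value because `p` is good, and `N_p(g)` is a value by reciprocity;
hence so are `N_p(q)` and, by reciprocity again, `N_q(p)`. -/
theorem isotropic_step (hA : ∀ v : Fin n → F, cub A.c v = 0 → v = 0) (h1 : (1 : F) ∈ A.values)
    (hn : 0 < n) (N : ℕ)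
    (HN : ∀ p : F[X], p.Monic → Irreducible p → p.natDegree ≤ N → A.GoodAt p) (m : ℕ) :
    ∀ q : F[X], q.Monic → Irreducible q → q.natDegree = m → m ≤ 2 * N + 1 → A.IsoAt q →
      ∀ f, polyNorm q f ∈ A.values := by
  induction m using Nat.strong_induction_on with
  | _ m ih =>
  intro q hqm hq hqd hmN hiso f
  have hm0 : 0 < m := hqd ▸ hq.natDegree_pos
  obtain ⟨w, hw0, hwd, hqw, hprim⟩ := A.exists_small_isotropic hq hiso hn
  obtain ⟨hΦ0, hlc, e, he, hdeg⟩ := A.leading_cub hA w hw0 _ hwd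
  obtain ⟨g, hg⟩ := hqw
  have hg0 : g ≠ 0 := by rintro rfl; exact hΦ0 (by rw [hg, mul_zero])
  have hgdeg : q.natDegree + g.natDegree = 3 * e := by
    rw [← hdeg, hg, natDegree_mul hq.ne_zero hg0]
  have hglc : g.leadingCoeff ∈ A.values := by
    rw [hg, leadingCoeff_mul, hqm.leadingCoeff, one_mul] at hlc
    exact hlc
  have hfac : ∀ p : F[X], p.Monic → Irreducible p → p ∣ g → ∀ f, polyNorm p f ∈ A.values := by
    intro p hpm hp hpg
    have hpd := natDegree_le_of_dvd hpg hg0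
    exact ih p.natDegree (by omega) p hpm hp rfl (by omega)
      ⟨w, hprim p hp, hg ▸ hpg.mul_left q⟩
  -- `x ^ deg q * x ^ deg g = (x ^ e) ^ 3` is a cube, and `x ^ deg g` is a value.
  have hconst : ∀ x : F, polyNorm q (C x) ∈ A.values := by
    intro x
    by_cases hx : x = 0
    · rw [hx, polyNorm_C hq.ne_zero, zero_pow (by omega)]
      exact zero_mem
    rw [polyNorm_C hq.ne_zero]
    refine mem_of_mul_mem (pow_natDegree_mem h1 x g hg0 hfac) (pow_ne_zero _ hx) ?_
    rw [← pow_add, hgdeg, mul_comm, pow_mul]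
    exact cube_mem h1 _
  have hirr : ∀ p : F[X], p.Monic → Irreducible p → p.natDegree ≤ m / 2 →
      polyNorm q p ∈ A.values := by
    intro p hpm hp hpd
    refine polyNorm_mem_symm h1 hqm hpm ?_
    by_cases hpg : p ∣ g
    · exact hfac p hpm hp hpg q
    have hgood := HN p hpm hp (by omega) w
    rw [hg, polyNorm_mul] at hgood
    refine mem_of_mul_mem ?_ (fun h => hpg ((polyNorm_eq_zero_iff hp g).1 h)) hgood
    refine polyNorm_mem_of_factors h1 ?_ fun r hrm hr hrg =>
      polyNorm_mem_symm h1 hpm hrm (hfac r hrm hr hrg p)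
    rw [polyNorm_C hp.ne_zero]
    exact pow_mem h1 hglc _
  have hsmall : ∀ f : F[X], f.natDegree ≤ m / 2 → polyNorm q f ∈ A.values := by
    intro f hf
    by_cases hf0 : f = 0
    · rw [hf0, (polyNorm_eq_zero_iff hq 0).2 (dvd_zero q)]
      exact zero_mem
    exact polyNorm_mem_of_factors h1 (hconst _) fun p hpm hp hpf =>
      hirr p hpm hp ((natDegree_le_of_dvd hpf hf0).trans hf)
  -- Modulo `q`, every `f` is a quotient of two polynomials of degree at most `deg q / 2`.
  obtain ⟨u, v, huv, hu, hv, hdvd⟩ := exists_small_representative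
    ((LinearMap.lsmul F[X] (Fin n → F[X]) f).restrictScalars F) hq.ne_zero hn
  rw [hqd] at hu hv
  have hdvd' : ∀ i, q ∣ f * u i - v i := hdvd
  have hu0 : u ≠ 0 := by
    rintro rfl
    obtain ⟨i, hi⟩ := exists_not_dvd_of_natDegree_lt (q := q) (huv.resolve_left (by simp))
      fun i => lt_of_le_of_lt (hv i) (by omega)
    exact hi (by simpa using hdvd' i)
  obtain ⟨i, hi⟩ := exists_not_dvd_of_natDegree_lt (q := q) hu0
      fun i => lt_of_le_of_lt (hu i) (by omega)
  have h2 := polyNorm_congr (hdvd' i)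
  rw [polyNorm_mul] at h2
  refine mem_of_mul_mem (hsmall (u i) (hu i)) (fun h => hi ((polyNorm_eq_zero_iff hq _).1 h)) ?_
  rw [h2]
  exact hsmall _ (hv i)

/-- All monic irreducible moduli are good, by induction on the degree. Modulo an anisotropic `q` every
vector `v` satisfies `v * u ≡ w` with `u`, `w` small, so only small primitive `w` matter. Modulo each
irreducible factor `p` of `cub w` the form is isotropic, and `deg p ≤ 3 (deg q / 2) ≤ 2 (deg q - 1) + 1`,
so `isotropic_step` applies to `p`, and reciprocity exchanges `p` and `q`. -/
theorem goodAt (hA : ∀ v : Fin n → F, cub A.c v = 0 → v = 0) (h1 : (1 : F) ∈ A.values)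
    (hn : 0 < n) (m : ℕ) :
    ∀ q : F[X], q.Monic → Irreducible q → q.natDegree = m → A.GoodAt q := by
  induction m using Nat.strong_induction_on with
  | _ m ih =>
  intro q hqm hq hqd v
  have hm0 : 0 < m := hqd ▸ hq.natDegree_pos
  have hiso := A.isotropic_step hA h1 hn (m - 1) fun p hpm hp hpd =>
    ih p.natDegree (by omega) p hpm hp rfl
  by_cases hqiso : A.IsoAt q
  · exact hiso m q hqm hq hqd (by omega) hqiso _
  have hsmall : ∀ w : Fin n → F[X], (∀ i, (w i).natDegree ≤ m / 2) →
      polyNorm q (cub A.c w) ∈ A.values := by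
    intro w hw
    by_cases hw0 : w = 0
    · rw [hw0, show cub A.c (0 : Fin n → F[X]) = 0 by simp [cub, tri],
        (polyNorm_eq_zero_iff hq 0).2 (dvd_zero q)]
      exact zero_mem
    obtain ⟨g, w', rfl, hw'0, hdeg, -, hprim⟩ := exists_primitive w hw0
    rw [cub_smul, polyNorm_mul, polyNorm_pow]
    refine mul_mem (cube_mem h1 _) ?_
    obtain ⟨hΦ0, hlc, e, he, hd⟩ := A.leading_cub hA w' hw'0 (m / 2)
      fun i => (hdeg i).trans (hw i)
    refine polyNorm_mem_of_factors h1 ?_ fun p hpm hp hpw => polyNorm_mem_symm h1 hqm hpm ?_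
    · rw [polyNorm_C hq.ne_zero]
      exact pow_mem h1 hlc _
    · have := natDegree_le_of_dvd hpw hΦ0
      exact hiso p.natDegree p hpm hp rfl (by omega) ⟨w', hprim p hp, hpw⟩ q
  obtain ⟨u, w, huw, hu, hw, hdvd⟩ := exists_small_representative (A.lmul v) hq.ne_zero hn
  rw [hqd] at hu hw
  have hu0 : u ≠ 0 := by
    rintro rfl
    obtain ⟨i, hi⟩ := exists_not_dvd_of_natDegree_lt (q := q) (huw.resolve_left (by simp))
      fun i => lt_of_le_of_lt (hw i) (by omega)
    exact hi (by simpa using hdvd i)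
  have hqu : ¬ q ∣ cub A.c u := fun h => hqiso
    ⟨u, exists_not_dvd_of_natDegree_lt hu0 fun i => lt_of_le_of_lt (hu i) (by omega), h⟩
  have h2 := polyNorm_congr (cub_congr A.c hdvd)
  have h3 : cub A.c (A.lmul v u) = cub A.c v * cub A.c u := A.comp' v u
  rw [h3, polyNorm_mul] at h2
  refine mem_of_mul_mem (hsmall u hu) (fun h => hqu ((polyNorm_eq_zero_iff hq _).1 h)) ?_
  rw [h2]
  exact hsmall w hw

/-- The norm of a value over a finite separable extension `K / F` is a value over `F`: by the primitive
element theorem `K` is a residue field of `F[X]`. -/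
theorem norm_mem_values (h1 : (1 : F) ∈ A.values) (hn : 0 < n)
    {K : Type*} [Field K] [Algebra F K] [FiniteDimensional F K] [Algebra.IsSeparable F K]
    (v : Fin n → K) : Algebra.norm F (cub A.c v) ∈ A.values := by
  by_cases hA : ∀ v : Fin n → F, cub A.c v = 0 → v = 0
  swap
  · push Not at hA
    obtain ⟨v, h1, h2⟩ := hA
    exact A.universal_of_isotropic ⟨v, h2, h1⟩ _
  obtain ⟨θ, hθ⟩ := Field.exists_primitive_element F K
  have hint : IsIntegral F θ := IsIntegral.of_finite F θ
  have hirr := minpoly.irreducible hint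
  have := Fact.mk hirr
  let f : AdjoinRoot (minpoly F θ) →ₐ[F] K :=
    AdjoinRoot.liftAlgHom _ (Algebra.ofId F K) θ (minpoly.aeval F θ)
  have hf : ∀ p : F[X], f (AdjoinRoot.mk _ p) = aeval θ p := fun p => by
    simp [f, aeval_def]; rfl
  have hpoly : ∀ x : K, ∃ p : F[X], aeval θ p = x := fun x => by
    have hx : x ∈ IntermediateField.adjoin F {θ} := hθ ▸ IntermediateField.mem_top
    rw [← IntermediateField.mem_toSubalgebra,
      IntermediateField.adjoin_simple_toSubalgebra_of_isAlgebraic hint.isAlgebraic,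
      Algebra.adjoin_singleton_eq_range_aeval] at hx
    exact hx
  let E : AdjoinRoot (minpoly F θ) ≃ₐ[F] K := AlgEquiv.ofBijective f
    ⟨f.toRingHom.injective, fun x => by
      obtain ⟨p, hp⟩ := hpoly x
      exact ⟨AdjoinRoot.mk _ p, (hf p).trans hp⟩⟩
  choose P hP using fun i => hpoly (v i)
  have h := A.goodAt hA h1 hn _ _ (minpoly.monic hint) hirr rfl P
  have h2 : cub A.c v = E (AdjoinRoot.mk _ (cub A.c P)) := by
    refine Eq.trans ?_ (hf _).symm
    rw [map_cub]
    congr 1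
    exact (funext hP).symm
  rw [h2, Algebra.norm_eq_of_algEquiv]
  exact h

end CompositionData
end Poly
end CubicComposition

/-! ### Passage from polynomials to coordinates -/

namespace CubicComposition
section Coordinates
variable {F : Type*} [Field F] {n : ℕ}

lemma exists_eq_single_add (m : Fin n →₀ ℕ) {d : ℕ} (h : m.degree = d + 1) :
    ∃ (i : Fin n) (m' : Fin n →₀ ℕ), m = Finsupp.single i 1 + m' ∧ m'.degree = d := by
  have hm : m ≠ 0 := by
    rintro rfl
    simp at h
  obtain ⟨i, hi⟩ := Finsupp.ne_iff.1 hm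
  have hle : Finsupp.single i 1 ≤ m := by
    rw [Finsupp.single_le_iff]
    exact Nat.one_le_iff_ne_zero.2 hi
  refine ⟨i, m - Finsupp.single i 1, (add_tsub_cancel_of_le hle).symm, ?_⟩
  have h2 := congrArg Finsupp.degree (add_tsub_cancel_of_le hle)
  rw [map_add, Finsupp.degree_single, h] at h2
  omega

open MvPolynomial in
lemma exists_cub_eq (φ : MvPolynomial (Fin n) F) (hφ : φ.IsHomogeneous 3) :
    ∃ c : Fin n → Fin n → Fin n → F, φ = cub c (X : Fin n → MvPolynomial (Fin n) F) := by
  classical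
  have hsum : ∀ s : Finset (Fin n →₀ ℕ), s ⊆ φ.support →
      ∃ c : Fin n → Fin n → Fin n → F,
        ∑ m ∈ s, monomial m (coeff m φ) = cub c (X : Fin n → MvPolynomial (Fin n) F) := by
    intro s
    induction s using Finset.induction_on with
    | empty => exact fun _ => ⟨0, by simp [cub, tri]⟩
    | insert m s hm ih =>
      intro hs
      obtain ⟨c, hc⟩ := ih fun x hx => hs (Finset.mem_insert_of_mem hx)
      have hd : m.degree = 3 := by
        have := hφ (mem_support_iff.1 (hs (Finset.mem_insert_self _ _)))
        rwa [Finsupp.degree_eq_weight_one (R := ℕ)]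
      obtain ⟨i, m₁, rfl, hd₁⟩ := exists_eq_single_add m hd
      obtain ⟨j, m₂, rfl, hd₂⟩ := exists_eq_single_add m₁ hd₁
      obtain ⟨k, m₃, rfl, hd₃⟩ := exists_eq_single_add m₂ hd₂
      obtain rfl : m₃ = 0 := (Finsupp.degree_eq_zero_iff _).1 hd₃
      refine ⟨fun i' j' k' => (if i' = i then if j' = j then if k' = k then
        coeff (Finsupp.single i 1 + (Finsupp.single j 1 + (Finsupp.single k 1 + 0))) φ
          else 0 else 0 else 0) + c i' j' k', ?_⟩
      rw [Finset.sum_insert hm, hc]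
      simp only [cub, tri, map_add, add_mul, Finset.sum_add_distrib]
      congr 1
      have : ∀ a : F, monomial (Finsupp.single i 1 + (Finsupp.single j 1 +
          (Finsupp.single k 1 + 0))) a = C a * (X i * X j * X k) := fun a => by
        simp only [X, C_mul_monomial, monomial_mul, mul_one, add_zero, add_assoc]
      rw [this]
      simp [apply_ite (C : F →+* MvPolynomial (Fin n) F), ite_mul, algebraMap_eq]
  obtain ⟨c, hc⟩ := hsum φ.support subset_rfl
  exact ⟨c, by rw [← hc]; exact φ.as_sum⟩

/-- The average of the coefficients over the permutations of the three indices. -/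
def symmetrize (c : Fin n → Fin n → Fin n → F) (i j k : Fin n) : F :=
  6⁻¹ * (c i j k + c i k j + c j i k + c j k i + c k i j + c k j i)

lemma isSymm_symmetrize (c : Fin n → Fin n → Fin n → F) : IsSymm (symmetrize c) :=
  fun i j k => ⟨by simp only [symmetrize]; ring, by simp only [symmetrize]; ring⟩

lemma cub_symmetrize (h6 : (6 : F) ≠ 0) {S : Type*} [CommRing S] [Algebra F S]
    (c : Fin n → Fin n → Fin n → F) (v : Fin n → S) : cub (symmetrize c) v = cub c v := by
  have e (i j k) : algebraMap F S (symmetrize c i j k) * (v i * v j * v k)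
      = algebraMap F S 6⁻¹ * (algebraMap F S (c i j k) * (v i * v j * v k)
        + algebraMap F S (c i k j) * (v i * v k * v j)
        + algebraMap F S (c j i k) * (v j * v i * v k)
        + algebraMap F S (c j k i) * (v j * v k * v i)
        + algebraMap F S (c k i j) * (v k * v i * v j)
        + algebraMap F S (c k j i) * (v k * v j * v i)) := by
    simp only [symmetrize, map_mul, map_add]; ring
  -- Each permuted triple sum equals the original one.
  have s1 (f : Fin n → Fin n → Fin n → S) :
      ∑ i, ∑ j, ∑ k, f i k j = ∑ i, ∑ j, ∑ k, f i j k :=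
    Finset.sum_congr rfl fun i _ => Finset.sum_comm
  have s2 (f : Fin n → Fin n → Fin n → S) :
      ∑ i, ∑ j, ∑ k, f j i k = ∑ i, ∑ j, ∑ k, f i j k := Finset.sum_comm
  let t : Fin n → Fin n → Fin n → S := fun i j k => algebraMap F S (c i j k) * (v i * v j * v k)
  have p1 := s1 t
  have p2 := s2 t
  have p3 : ∑ i, ∑ j, ∑ k, t j k i = ∑ i, ∑ j, ∑ k, t i j k :=
    (s2 fun i j k => t i k j).trans p1
  have p4 : ∑ i, ∑ j, ∑ k, t k i j = ∑ i, ∑ j, ∑ k, t i j k :=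
    (s1 fun i j k => t j i k).trans p2
  have p5 : ∑ i, ∑ j, ∑ k, t k j i = ∑ i, ∑ j, ∑ k, t i j k :=
    (s1 fun i j k => t j k i).trans p3
  simp only [t] at p1 p2 p3 p4 p5
  have h : algebraMap F S 6⁻¹ * 6 = 1 := by
    rw [← map_ofNat (algebraMap F S) 6, ← map_mul, inv_mul_cancel₀ h6, map_one]
  simp only [cub, tri, e, ← Finset.mul_sum, Finset.sum_add_distrib]
  rw [p1, p2, p3, p4, p5]
  linear_combination (∑ i, ∑ j, ∑ k, algebraMap F S (c i j k) * (v i * v j * v k)) * h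

lemma six_ne_zero_of_ringChar (h : ringChar F = 0 ∨ 3 < ringChar F) : (6 : F) ≠ 0 := by
  intro h6
  have hd : ringChar F ∣ 6 := (ringChar.spec F 6).1 (by exact_mod_cast h6)
  rcases h with h | h
  · rw [h] at hd
    simp at hd
  · have hp : (ringChar F).Prime :=
      (CharP.char_is_prime_or_zero F (ringChar F)).resolve_right (by omega)
    have := Nat.le_of_dvd (by norm_num) hd
    interval_cases ringChar F <;> revert hp hd <;> decide

lemma bil_eq (B : (Fin n → F) →ₗ[F] (Fin n → F) →ₗ[F] (Fin n → F)) (v w : Fin n → F) :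
    bil (fun i j => B (Pi.single i 1) (Pi.single j 1)) v w = B v w := by
  classical
  have h (u : Fin n → F) : u = ∑ i, u i • (Pi.single i 1 : Fin n → F) := by
    ext a
    simp [Finset.sum_apply, Pi.single_apply]
  conv_rhs => rw [h v, h w]
  ext k
  simp only [bil, map_sum, map_smul, LinearMap.sum_apply, LinearMap.smul_apply, Finset.sum_apply,
    Pi.smul_apply, smul_eq_mul, Algebra.algebraMap_self, RingHom.id_apply, Finset.mul_sum]
  rw [Finset.sum_comm]
  exact Finset.sum_congr rfl fun i _ => Finset.sum_congr rfl fun j _ => by ring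

/-- A nondegenerate cubic form with composition, given as a homogeneous polynomial, comes from
`CompositionData`. -/
lemma exists_compositionData (hchar : ringChar F = 0 ∨ 3 < ringChar F)
    (φ : MvPolynomial (Fin n) F) (hhom : φ.IsHomogeneous 3)
    (hnondeg : ∀ v : Fin n → F, (∀ v₂ v₃ : Fin n → F, cubicPolar φ v v₂ v₃ = 0) → v = 0)
    (hcomp : ∃ B : (Fin n → F) →ₗ[F] (Fin n → F) →ₗ[F] (Fin n → F),
      ∀ v w : Fin n → F,
        MvPolynomial.eval (B v w) φ = MvPolynomial.eval v φ * MvPolynomial.eval w φ) :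
    ∃ A : CompositionData F n, φ = cub A.c (MvPolynomial.X : Fin n → MvPolynomial (Fin n) F) := by
  have h6 := six_ne_zero_of_ringChar hchar
  obtain ⟨c, hc⟩ := exists_cub_eq φ hhom
  obtain ⟨B, hB⟩ := hcomp
  have hev (v : Fin n → F) : MvPolynomial.eval v φ = cub (symmetrize c) v := by
    rw [cub_symmetrize h6, hc, ← MvPolynomial.coe_aeval_eq_eval, RingHom.coe_coe, map_cub]
    congr 1
    ext i
    simp
  refine ⟨⟨symmetrize c, fun i j => B (Pi.single i 1) (Pi.single j 1), isSymm_symmetrize c, h6,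
    fun v hv => hnondeg v fun y z => ?_, fun v w => ?_⟩, ?_⟩
  · simp only [cubicPolar, hev]
    rw [← (isSymm_symmetrize c).six_tri, hv, mul_zero, mul_zero]
  · rw [bil_eq, ← hev, ← hev, ← hev, hB]
  · rw [cub_symmetrize h6, ← hc]

lemma eval_map_cub (c : Fin n → Fin n → Fin n → F) {K : Type*} [CommRing K] [Algebra F K]
    (v : Fin n → K) :
    MvPolynomial.eval v ((cub c (MvPolynomial.X : Fin n → MvPolynomial (Fin n) F)).map
      (algebraMap F K)) = cub c v := by
  rw [MvPolynomial.eval_map, ← MvPolynomial.aeval_def, map_cub]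
  congr 1
  ext i
  simp

lemma eval_cub (c : Fin n → Fin n → Fin n → F) (v : Fin n → F) :
    MvPolynomial.eval v (cub c (MvPolynomial.X : Fin n → MvPolynomial (Fin n) F)) = cub c v := by
  simpa using eval_map_cub c v

lemma CompositionData.isSimilarityFactor_of_mem_values (A : CompositionData F n) {x : F}
    (hx : x ∈ A.values) (hx0 : x ≠ 0) :
    IsSimilarityFactor (cub A.c (MvPolynomial.X : Fin n → MvPolynomial (Fin n) F)) x := by
  obtain ⟨v, rfl⟩ := hx
  let L : (Fin n → F) →ₗ[F] (Fin n → F) :=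
    { toFun := bil A.b v
      map_add' := bil_add_right _ _
      map_smul' := fun s u => bil_smul_right _ _ _ _ }
  have hinj : Function.Injective L :=
    (injective_iff_map_eq_zero L).2 fun w hw => A.eq_zero_of_bil_left hx0 hw
  refine ⟨LinearEquiv.ofInjectiveEndo L hinj, fun w => ?_⟩
  rw [eval_cub, eval_cub]
  exact A.comp v w

end Coordinates
end CubicComposition

/-- **SNP for nondegenerate cubic forms permitting composition that are not norms of cubic
field extensions.**  Let `char F = 0` or `char F > 3`, and let `φ` be a nondegenerate cubic
form in `n` variables over `F` permitting composition (there is an `F`-bilinear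
`∗ : F^n × F^n → F^n` with `φ(v ∗ w) = φ(v)·φ(w)`).  If `φ` is not isomorphic to the norm
form of a cubic field extension of `F`, then `φ` satisfies Scharlau's norm principle for
every finite separable extension `K/F`: if `a ∈ G_K(φ)` then `N_{K/F}(a) ∈ G_F(φ)`. -/
theorem snp_cubic_composition_not_field_norm
    {F : Type u} [Field F]
    (hchar : ringChar F = 0 ∨ 3 < ringChar F)
    (n : ℕ) (φ : MvPolynomial (Fin n) F) (hhom : φ.IsHomogeneous 3)
    (hnondeg : ∀ v : Fin n → F,
      (∀ v₂ v₃ : Fin n → F, cubicPolar φ v v₂ v₃ = 0) → v = 0)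
    (hcomp : ∃ B : (Fin n → F) →ₗ[F] (Fin n → F) →ₗ[F] (Fin n → F),
      ∀ v w : Fin n → F,
        MvPolynomial.eval (B v w) φ = MvPolynomial.eval v φ * MvPolynomial.eval w φ)
    (hnotnorm : ¬ ∃ (E : Type u) (_ : Field E) (_ : Algebra F E),
      Module.finrank F E = 3 ∧
        ∃ f : (Fin n → F) ≃ₗ[F] E,
          ∀ v : Fin n → F, Algebra.norm F (f v) = MvPolynomial.eval v φ)
    (K : Type u) [Field K] [Algebra F K] [FiniteDimensional F K]
    [Algebra.IsSeparable F K]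
    (a : K) (ha : a ≠ 0)
    (hG : IsSimilarityFactor (φ.map (algebraMap F K)) a) :
    IsSimilarityFactor φ (Algebra.norm F a) := by
  obtain ⟨A, rfl⟩ := CubicComposition.exists_compositionData hchar φ hhom hnondeg hcomp
  by_cases h0 : ∀ v : Fin n → F, CubicComposition.cub A.c v = 0
  -- A form with no nonzero value has every similarity factor.
  · refine ⟨LinearEquiv.refl F _, fun v => ?_⟩
    rw [LinearEquiv.refl_apply, CubicComposition.eval_cub, h0, mul_zero]
  push Not at h0
  obtain ⟨u, hu⟩ := CubicComposition.CompositionData.one_mem h0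
  have hn : 0 < n := by
    rcases Nat.eq_zero_or_pos n with rfl | hn
    · obtain ⟨v, hv⟩ := h0
      exact absurd (by simp [CubicComposition.cub, CubicComposition.tri]) hv
    · exact hn
  obtain ⟨g, hg⟩ := hG
  have hgu := hg (algebraMap F K ∘ u)
  have hu' : CubicComposition.cub A.c (algebraMap F K ∘ u) = 1 := by
    have := CubicComposition.map_cub A.c (Algebra.ofId F K) u
    rw [hu, map_one] at this
    exact this.symm
  rw [CubicComposition.eval_map_cub, CubicComposition.eval_map_cub, hu', mul_one] at hgu
  refine A.isSimilarityFactor_of_mem_values ?_ ((Algebra.norm_ne_zero_iff).2 ha)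
  rw [← hgu]
  exact A.norm_mem_values ⟨u, hu⟩ hn _
end
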